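/- arXiv:1806.00856 — 2 statements merged into one kernel-verified Lean document; each statement's English description precedes it below -/
import Mathlib

section
/- Let k be an algebraically closed field, d ≥ 2 an integer, and φ₀, φ₁, φ₂ ∈ R = k[x,y,z] homogeneous polynomials of degree d−1 generating the ideal I = (φ₀, φ₁, φ₂). Assume the Krull dimension of R/I is at most 1. Then dim_k (R/I)_m = (d−1)² − (d−2) for all sufficiently large m (i.e., d−2 = (d−1)² − τ(Z)) if and only if there exist syzygies u, v ∈ N, with u homogeneous of degree 1 and v homogeneous of degree d−2, which are linearly independent over R and satisfy N = R·u + R·v; that is, if and only if the sheaf of relations E is free: E ≅ O_{P²}(−1) ⊕ O_{P²}(2−d). -/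
open MvPolynomial Filter

namespace FreeCrit

section basics
variable {k : Type*} [Field k]

theorem hcomp_mul {n e : ℕ} (f : MvPolynomial (Fin 3) k) {g : MvPolynomial (Fin 3) k}
    (hg : g.IsHomogeneous e) :
    homogeneousComponent (n + e) (f * g) = homogeneousComponent n f * g := by
  letI := MvPolynomial.gradedAlgebra (σ := Fin 3) (R := k)
  have := DirectSum.coe_decompose_mul_add_of_right_mem (homogeneousSubmodule (Fin 3) k)
    (a := f) (b := g) (i := n) (j := e) hg
  have h2 : ∀ (p : MvPolynomial (Fin 3) k) i,
    ((DirectSum.decompose (homogeneousSubmodule (Fin 3) k) p i : _) : MvPolynomial (Fin 3) k)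
      = homogeneousComponent i p := fun p i => decomposition.decompose'_apply p i
  rwa [h2, h2] at this

theorem hcomp_top {f g : MvPolynomial (Fin 3) k} :
    homogeneousComponent (f.totalDegree + g.totalDegree) (f * g) =
      homogeneousComponent f.totalDegree f * homogeneousComponent g.totalDegree g := by
  have h0 : f * g = (∑ i ∈ Finset.range (f.totalDegree + 1), homogeneousComponent i f) * g := by
    rw [sum_homogeneousComponent f]
  rw [h0, Finset.sum_mul, map_sum, Finset.sum_range_succ, Finset.sum_eq_zero, zero_add]
  · rw [mul_comm, add_comm, hcomp_mul _ (homogeneousComponent_isHomogeneous _ _), mul_comm]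
  · intro j hj
    have hj : j < f.totalDegree := by simpa using hj
    have : f.totalDegree + g.totalDegree = (f.totalDegree - j + g.totalDegree) + j := by omega
    rw [this, mul_comm, hcomp_mul _ (homogeneousComponent_isHomogeneous _ _),
      homogeneousComponent_eq_zero, zero_mul]
    omega

theorem finrank_H (n : ℕ) :
    Module.finrank k (homogeneousSubmodule (Fin 3) k n) = (n + 2).choose 2 := by
  rw [homogeneousSubmodule_eq_finsupp_supported]
  rw [(AddMonoidAlgebra.supportedEquivFinsupp (R := k) (S := k)
    {d : Fin 3 →₀ ℕ | d.degree = n}).finrank_eq]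
  have hs : {d : Fin 3 →₀ ℕ | d.degree = n} =
      ((Finset.univ : Finset (Fin 3)).finsuppAntidiag n : Set (Fin 3 →₀ ℕ)) := by
    ext d
    simp [Finset.mem_finsuppAntidiag, Finsupp.degree_eq_sum]
  rw [hs, Module.finrank_finsupp_self]
  simp only [Fintype.card_coe, SetLike.coe_sort_coe, Finset.card_finsuppAntidiag_nat_eq_choose]
  simp only [Finset.card_univ, Fintype.card_fin]
  rw [show 3 + n - 1 = n + 2 by omega]
  exact Nat.choose_symm_add

theorem finrank_H' (n : ℕ) :
    2 * (Module.finrank k (homogeneousSubmodule (Fin 3) k n) : ℤ) = (n + 1) * (n + 2) := by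
  rw [finrank_H]
  have := Nat.choose_two_right (n+2)
  have h2 : 2 ∣ (n + 2) * (n + 2 - 1) := (Nat.even_mul_pred_self _).two_dvd
  have h3 : 2 * (n+2).choose 2 = (n+2) * (n+1) := by
    rw [this]; exact Nat.mul_div_cancel' h2
  exact_mod_cast h3.trans (mul_comm _ _)

instance finH (n : ℕ) : FiniteDimensional k (homogeneousSubmodule (Fin 3) k n) :=
  Module.Finite.iff_fg.2 (homogeneousSubmodule_fg _ _ n)

theorem finrank_map_add {M M' : Type*} [AddCommGroup M] [Module k M] [AddCommGroup M'] [Module k M']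
    (p : Submodule k M) [FiniteDimensional k p] (f : M →ₗ[k] M') :
    Module.finrank k (p.map f) + Module.finrank k (p ⊓ LinearMap.ker f : Submodule k M)
      = Module.finrank k p := by
  have := LinearMap.finrank_range_add_finrank_ker (f.domRestrict p)
  rw [LinearMap.range_domRestrict] at this
  rw [← this, LinearMap.ker_domRestrict]
  congr 1
  rw [← Submodule.finrank_map_subtype_eq p, Submodule.map_comap_subtype]

theorem finrank_map_inj {M M' : Type*} [AddCommGroup M] [Module k M] [AddCommGroup M'] [Module k M']
    (p : Submodule k M) (f : M →ₗ[k] M') (hf : Function.Injective f) :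
    Module.finrank k (p.map f) = Module.finrank k p :=
  (LinearEquiv.finrank_eq (Submodule.equivMapOfInjective f hf p)).symm

/-- primitive vectors -/
theorem prim {R : Type*} [CommRing R] [IsDomain R] [UniqueFactorizationMonoid R]
    (a b : Fin 3 → R) (ha : ∀ p, (∀ i, p ∣ a i) → IsUnit p)
    (h : ∀ i j, a i * b j = a j * b i) : ∃ c, ∀ i, b i = c * a i := by
  classical
  letI := Classical.choice (inferInstance : Nonempty (NormalizedGCDMonoid R))
  have hu : IsUnit (Finset.univ.gcd a) := ha _ fun i => Finset.gcd_dvd (Finset.mem_univ i)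
  have hdiv : ∀ j, a j ∣ b j := by
    intro j
    have h1 : a j ∣ Finset.univ.gcd fun i => a i * b j := by
      apply Finset.dvd_gcd
      intro i _
      rw [h i j]; exact Dvd.intro _ rfl
    have h2 := h1.trans (Finset.gcd_mul_right' (s := Finset.univ) (f := a) (b j)).dvd
    exact (hu.dvd_mul_left).1 h2
  obtain ⟨j, hj⟩ : ∃ j, a j ≠ 0 := by
    by_contra! hc
    exact not_isUnit_zero (ha 0 fun i => by simp [hc i])
  obtain ⟨c, hc⟩ := hdiv j
  refine ⟨c, fun i => ?_⟩
  apply mul_left_cancel₀ hj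
  rw [h j i, hc]; ring

theorem X2_reg (c p q : MvPolynomial (Fin 3) k) (h : X 2 * c = X 1 * p - X 0 * q) :
    ∃ p' q', c = X 1 * p' - X 0 * q' := by
  have h1 : c ∈ Ideal.span (MvPolynomial.X '' {1, 0} : Set (MvPolynomial (Fin 3) k)) := by
    have h2 : X 2 * c ∈ Ideal.span (MvPolynomial.X '' {1, 0} : Set (MvPolynomial (Fin 3) k)) := by
      rw [Set.image_pair, Ideal.mem_span_pair]
      exact ⟨p, -q, by rw [h]; ring⟩
    rw [mem_ideal_span_X_image] at h2 ⊢
    intro m hm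
    obtain ⟨i, hi, hi'⟩ := h2 (Finsupp.single 2 1 + m) (by
      rw [mem_support_iff, coeff_X_mul]; exact mem_support_iff.1 hm)
    refine ⟨i, hi, ?_⟩
    rcases hi with rfl | rfl <;> simpa using hi'
  rw [Set.image_pair, Ideal.mem_span_pair] at h1
  obtain ⟨a, b, hab⟩ := h1
  exact ⟨a, -b, by rw [← hab]; ring⟩

noncomputable def chn (k : Type*) [Field k] (j : ℕ) :
    MvPolynomial (Fin 3) k →ₐ[k] MvPolynomial (Fin 3) k :=
  aeval (fun i : Fin 3 => if (i : ℕ) < j then 0 else X i)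

theorem chn_lt (j : ℕ) (hj : j < 3) : RingHom.ker (chn k j) < RingHom.ker (chn k (j+1)) := by
  have hc : (chn k (j+1)).comp (chn k j) = chn k (j+1) := by
    apply MvPolynomial.algHom_ext
    intro i
    simp only [chn, AlgHom.comp_apply, aeval_X]
    split_ifs with h1 h2 h2
    · simp
    · omega
    · rw [aeval_X, if_pos h2]
    · rw [aeval_X, if_neg h2]
  refine lt_of_le_of_ne ?_ ?_
  · intro x hx
    rw [RingHom.mem_ker] at hx ⊢
    rw [← hc, AlgHom.comp_apply, hx, map_zero]
  · intro h
    have : (X ⟨j, hj⟩ : MvPolynomial (Fin 3) k) ∈ RingHom.ker (chn k (j+1)) := by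
      simp [RingHom.mem_ker, chn]
    rw [← h] at this
    simp [RingHom.mem_ker, chn] at this

theorem three_le_height : 3 ≤ (RingHom.ker (chn k 3)).height := by
  haveI : ∀ j, (RingHom.ker (chn k j)).IsPrime := fun j => RingHom.ker_isPrime _
  have h0 := Ideal.height_add_one_le_of_lt_of_isPrime (chn_lt (k := k) 0 (by norm_num))
  have h1 := Ideal.height_add_one_le_of_lt_of_isPrime (chn_lt (k := k) 1 (by norm_num))
  have h2 := Ideal.height_add_one_le_of_lt_of_isPrime (chn_lt (k := k) 2 (by norm_num))
  simp only [zero_add, one_add_one_eq_two] at h0 h1 h2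
  calc (3 : ℕ∞) = 0 + 1 + 1 + 1 := by norm_num
    _ ≤ (RingHom.ker (chn k 0)).height + 1 + 1 + 1 := by gcongr; simp
    _ ≤ (RingHom.ker (chn k 1)).height + 1 + 1 := by gcongr
    _ ≤ (RingHom.ker (chn k 2)).height + 1 := by gcongr
    _ ≤ _ := h2

theorem phi_prim {e : ℕ} (φ : Fin 3 → MvPolynomial (Fin 3) k)
    (hφ : ∀ i, (φ i).IsHomogeneous e) 
    (hdim : ringKrullDim (MvPolynomial (Fin 3) k ⧸ Ideal.span (Set.range φ)) ≤ 1) :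
    ∀ p, (∀ i, p ∣ φ i) → IsUnit p := by
  have key : ∀ p ∈ RingHom.ker (chn k 3), (∀ i, p ∣ φ i) → False := by
    intro p hp hdvd
    haveI : (RingHom.ker (chn k 3)).IsPrime := RingHom.ker_isPrime _
    have h1 := Ideal.height_le_ringKrullDim_quotient_add_one hp
    have hle : Ideal.span (Set.range φ) ≤ Ideal.span {p} := by
      rw [Ideal.span_le]
      rintro _ ⟨i, rfl⟩
      exact Ideal.mem_span_singleton.2 (hdvd i)
    have h2 := ringKrullDim_le_of_surjective (Ideal.Quotient.factor hle)
      (Ideal.Quotient.factor_surjective hle)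
    have h3 : ((3 : ℕ∞) : WithBot ℕ∞) ≤ 1 + 1 := by
      refine le_trans ?_ (h1.trans (add_le_add_left (h2.trans hdim) 1))
      exact_mod_cast three_le_height (k := k)
    revert h3
    decide
  intro p hp
  by_contra hu
  rcases Nat.eq_zero_or_pos p.totalDegree with h0 | hpos
  · rw [totalDegree_eq_zero_iff_eq_C] at h0
    by_cases hc : coeff 0 p = 0
    · rw [hc, C_0] at h0
      exact key p (by simp [h0]) hp
    · apply hu
      rw [h0]
      exact (IsUnit.mk0 _ hc).map C
  · refine key (homogeneousComponent p.totalDegree p) ?_ ?_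
    · rw [RingHom.mem_ker, chn]
      have : (fun i : Fin 3 => if (i : ℕ) < 3 then (0 : MvPolynomial (Fin 3) k) else X i) = 0 := by
        ext1 i; simp [i.2]
      rw [this]
      have h := (homogeneousComponent_isHomogeneous p.totalDegree p).coeff_eq_zero (d := 0)
        (by simp; omega)
      rw [MvPolynomial.aeval_zero, constantCoeff_eq, h, map_zero]
    · intro i
      obtain ⟨a, ha⟩ := hp i
      by_cases hz : φ i = 0
      · simp [hz]
      have hpz : p ≠ 0 := by rintro rfl; simp at ha; exact hz ha
      have haz : a ≠ 0 := by rintro rfl; simp at ha; exact hz ha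
      have hd := totalDegree_mul_of_isDomain hpz haz
      rw [← ha, (hφ i).totalDegree hz] at hd
      refine ⟨homogeneousComponent a.totalDegree a, ?_⟩
      rw [← hcomp_top, ← ha, ← hd]
      exact (homogeneousComponent_eq_self (hφ i)).symm
end basics
end FreeCrit
namespace FreeCrit
section syz
variable {k : Type*} [Field k]

local notation "R" => MvPolynomial (Fin 3) k

/-- triples of forms of degree `m` -/
noncomputable def V (k : Type*) [Field k] (m : ℕ) : Submodule k (Fin 3 → MvPolynomial (Fin 3) k) :=
  Submodule.pi Set.univ (fun _ => homogeneousSubmodule (Fin 3) k m)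

theorem mem_V {m : ℕ} {w : Fin 3 → R} : w ∈ V k m ↔ ∀ i, (w i).IsHomogeneous m := by
  simp [V, Submodule.mem_pi]

noncomputable def Vequiv (k : Type*) [Field k] (m : ℕ) :
    V k m ≃ₗ[k] (Fin 3 → homogeneousSubmodule (Fin 3) k m) where
  toFun w i := ⟨w.1 i, mem_V.1 w.2 i⟩
  invFun w := ⟨fun i => (w i).1, mem_V.2 fun i => (w i).2⟩
  left_inv _ := rfl
  right_inv _ := rfl
  map_add' _ _ := rfl
  map_smul' _ _ := rfl

instance finV (m : ℕ) : FiniteDimensional k (V k m) :=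
  Module.Finite.equiv (Vequiv k m).symm

theorem finrank_V (m : ℕ) : Module.finrank k (V k m) =
    3 * Module.finrank k (homogeneousSubmodule (Fin 3) k m) := by
  rw [(Vequiv k m).finrank_eq, Module.finrank_pi_fintype]
  simp

noncomputable def ev (φ : Fin 3 → R) : (Fin 3 → R) →ₗ[R] R := Fintype.linearCombination R φ

theorem ev_apply (φ w : Fin 3 → R) : ev φ w = ∑ i, w i * φ i := by
  simp [ev, Fintype.linearCombination_apply]

/-- syzygies of degree `m` -/
noncomputable def Nm (φ : Fin 3 → R) (m : ℕ) : Submodule k (Fin 3 → R) :=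
  V k m ⊓ LinearMap.ker ((ev φ).restrictScalars k)

theorem mem_Nm {φ w : Fin 3 → R} {m : ℕ} :
    w ∈ Nm φ m ↔ (∀ i, (w i).IsHomogeneous m) ∧ ev φ w = 0 := by
  rw [Nm, Submodule.mem_inf, mem_V]; rfl

instance finNm (φ : Fin 3 → R) (m : ℕ) : FiniteDimensional k (Nm φ m) :=
  Submodule.finiteDimensional_of_le (inf_le_left : Nm φ m ≤ V k m)

/-- the Hilbert function of R/J -/
noncomputable def HF (J : Ideal R) (m : ℕ) : ℕ :=
  Module.finrank k ((homogeneousSubmodule (Fin 3) k m).map (Ideal.Quotient.mkₐ k J).toLinearMap)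

theorem HF_add (J : Ideal R) (m : ℕ) :
    HF J m + Module.finrank k
      (homogeneousSubmodule (Fin 3) k m ⊓ J.restrictScalars k : Submodule k R) =
      Module.finrank k (homogeneousSubmodule (Fin 3) k m) := by
  rw [← finrank_map_add (homogeneousSubmodule (Fin 3) k m) (Ideal.Quotient.mkₐ k J).toLinearMap]
  have : LinearMap.ker (Ideal.Quotient.mkₐ k J).toLinearMap = J.restrictScalars k := by
    ext x
    simp [Ideal.Quotient.eq_zero_iff_mem]
  rw [this]; rfl

/-- homogeneous component of a triple -/
noncomputable def hc (n : ℕ) (w : Fin 3 → R) : Fin 3 → R := fun i => homogeneousComponent n (w i)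

theorem hc_hom (n : ℕ) (w : Fin 3 → R) (i) : (hc n w i).IsHomogeneous n :=
  homogeneousComponent_isHomogeneous _ _

theorem ev_hc {e : ℕ} {φ : Fin 3 → R} (hφ : ∀ i, (φ i).IsHomogeneous e) (n : ℕ) (w : Fin 3 → R) :
    ev φ (hc n w) = homogeneousComponent (n + e) (ev φ w) := by
  rw [ev_apply, ev_apply, map_sum]
  exact Finset.sum_congr rfl fun i _ => (hcomp_mul _ (hφ i)).symm

theorem hc_self {n : ℕ} {w : Fin 3 → R} (hw : ∀ i, (w i).IsHomogeneous n) : hc n w = w :=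
  funext fun i => homogeneousComponent_eq_self (hw i)

theorem map_ev {e : ℕ} {φ : Fin 3 → R} (hφ : ∀ i, (φ i).IsHomogeneous e) (m : ℕ) :
    (V k m).map ((ev φ).restrictScalars k) = homogeneousSubmodule (Fin 3) k (m + e) ⊓
      (Ideal.span (Set.range φ)).restrictScalars k := by
  ext f
  simp only [Submodule.mem_map, Submodule.mem_inf, mem_homogeneousSubmodule, mem_V,
    LinearMap.restrictScalars_apply, Submodule.restrictScalars_mem]
  constructor
  · rintro ⟨w, hw, rfl⟩
    rw [ev_apply]
    refine ⟨IsHomogeneous.sum _ _ _ fun i _ => (hw i).mul (hφ i), ?_⟩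
    exact Ideal.sum_mem _ fun i _ => Ideal.mul_mem_left _ _ (Ideal.subset_span ⟨i, rfl⟩)
  · rintro ⟨hf, hI⟩
    rw [Ideal.mem_span_range_iff_exists_fun] at hI
    obtain ⟨w, hw⟩ := hI
    refine ⟨hc m w, hc_hom m w, ?_⟩
    rw [ev_hc hφ, ev_apply, hw]
    exact homogeneousComponent_eq_self hf

theorem hilbI {e : ℕ} {φ : Fin 3 → R} (hφ : ∀ i, (φ i).IsHomogeneous e) (m : ℕ) :
    HF (Ideal.span (Set.range φ)) (m + e) +
        3 * Module.finrank k (homogeneousSubmodule (Fin 3) k m) =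
      Module.finrank k (homogeneousSubmodule (Fin 3) k (m + e)) + Module.finrank k (Nm φ m) := by
  have h1 := HF_add (Ideal.span (Set.range φ)) (m + e)
  have h2 := finrank_map_add (V k m) ((ev φ).restrictScalars k)
  rw [map_ev hφ, finrank_V] at h2
  change _ + Module.finrank k (Nm φ m) = _ at h2
  omega

/-- a product of submodules is the product -/
noncomputable def prodEq {M M' : Type*} [AddCommGroup M] [Module k M] [AddCommGroup M'] [Module k M']
    (p : Submodule k M) (q : Submodule k M') : p.prod q ≃ₗ[k] p × q where
  toFun x := (⟨x.1.1, x.2.1⟩, ⟨x.1.2, x.2.2⟩)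
  invFun x := ⟨(x.1.1, x.2.1), x.1.2, x.2.2⟩
  left_inv _ := rfl
  right_inv _ := rfl
  map_add' _ _ := rfl
  map_smul' _ _ := rfl

theorem free_N {r q : ℕ} {φ : Fin 3 → R} {u v : Fin 3 → R}
    (hu : ev φ u = 0) (hv : ev φ v = 0)
    (hur : ∀ i, (u i).IsHomogeneous r) (hvq : ∀ i, (v i).IsHomogeneous q)
    (hli : ∀ a b : R, a • u + b • v = 0 → a = 0 ∧ b = 0)
    (hN : ∀ w, ev φ w = 0 → ∃ a b : R, a • u + b • v = w) (a : ℕ) :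
    Module.finrank k (Nm φ (a + (r + q))) =
      Module.finrank k (homogeneousSubmodule (Fin 3) k (a + q)) +
      Module.finrank k (homogeneousSubmodule (Fin 3) k (a + r)) := by
  let g : R × R →ₗ[R] (Fin 3 → R) :=
    (LinearMap.toSpanSingleton R _ u).coprod (LinearMap.toSpanSingleton R _ v)
  have hg : ∀ x, g x = x.1 • u + x.2 • v := fun x => by simp [g]
  have hinj : Function.Injective (g.restrictScalars k) := by
    rw [← LinearMap.ker_eq_bot, LinearMap.ker_eq_bot']
    rintro ⟨x, y⟩ h
    obtain ⟨h1, h2⟩ := hli x y (by rw [← hg (x, y)]; exact h)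
    rw [h1, h2]; rfl
  have hmap : Nm φ (a + (r + q)) = ((homogeneousSubmodule (Fin 3) k (a + q)).prod
      (homogeneousSubmodule (Fin 3) k (a + r))).map (g.restrictScalars k) := by
    ext w
    rw [mem_Nm, Submodule.mem_map]
    constructor
    · rintro ⟨hw, hw0⟩
      obtain ⟨x, y, hxy⟩ := hN w hw0
      refine ⟨(homogeneousComponent (a + q) x, homogeneousComponent (a + r) y),
        ⟨homogeneousComponent_isHomogeneous _ _, homogeneousComponent_isHomogeneous _ _⟩, ?_⟩
      rw [LinearMap.restrictScalars_apply, hg, ← hc_self hw, ← hxy]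
      ext1 i
      simp only [hc, Pi.add_apply, Pi.smul_apply, smul_eq_mul, map_add]
      rw [← hcomp_mul _ (hur i), ← hcomp_mul _ (hvq i)]
      congr 3 <;> ring
    · rintro ⟨⟨x, y⟩, ⟨hx, hy⟩, rfl⟩
      rw [LinearMap.restrictScalars_apply, hg]
      constructor
      · intro i
        have h1 := IsHomogeneous.mul hx (hur i)
        have h2 := IsHomogeneous.mul hy (hvq i)
        rw [show a + q + r = a + (r + q) by ring] at h1
        rw [show a + r + q = a + (r + q) by ring] at h2
        exact h1.add h2
      · simp [hu, hv]
  rw [hmap, finrank_map_inj _ _ hinj]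
  rw [(prodEq _ _).finrank_eq]
  exact Module.finrank_prod

end syz
end FreeCrit
namespace FreeCrit
section main
variable {k : Type*} [Field k]

local notation "R" => MvPolynomial (Fin 3) k

theorem cross0 (u w : Fin 3 → R) : crossProduct u w 0 = u 1 * w 2 - u 2 * w 1 := by
  simp [cross_apply]
theorem cross1 (u w : Fin 3 → R) : crossProduct u w 1 = u 2 * w 0 - u 0 * w 2 := by
  simp [cross_apply]
theorem cross2 (u w : Fin 3 → R) : crossProduct u w 2 = u 0 * w 1 - u 1 * w 0 := by
  simp [cross_apply]

theorem cross_hc {r : ℕ} {u : Fin 3 → R} (hu : ∀ i, (u i).IsHomogeneous r) (n : ℕ) (w : Fin 3 → R) :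
    crossProduct u (hc n w) = hc (n + r) (crossProduct u w) := by
  have h : ∀ i j, homogeneousComponent (n + r) (u i * w j) = u i * homogeneousComponent n (w j) :=
    fun i j => by rw [mul_comm, hcomp_mul _ (hu i), mul_comm]
  ext1 i
  fin_cases i
  · simp [hc, cross0, h]
  · simp [hc, cross1, h]
  · simp [hc, cross2, h]

theorem hc_smul {e : ℕ} {φ : Fin 3 → R} (hφ : ∀ i, (φ i).IsHomogeneous e) (n : ℕ) (f : R) :
    hc (n + e) (f • φ) = homogeneousComponent n f • φ :=
  funext fun i => hcomp_mul f (hφ i)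

theorem cross_par {φ u w : Fin 3 → R} (hprim : ∀ p, (∀ i, p ∣ φ i) → IsUnit p)
    (hu : ev φ u = 0) (hw : ev φ w = 0) : ∃ f : R, crossProduct u w = f • φ := by
  rw [ev_apply, Fin.sum_univ_three] at hu hw
  have h01 : φ 0 * crossProduct u w 1 = φ 1 * crossProduct u w 0 := by
    rw [cross0, cross1]; linear_combination u 2 * hw - w 2 * hu
  have h12 : φ 1 * crossProduct u w 2 = φ 2 * crossProduct u w 1 := by
    rw [cross1, cross2]; linear_combination u 0 * hw - w 0 * hu
  have h20 : φ 2 * crossProduct u w 0 = φ 0 * crossProduct u w 2 := by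
    rw [cross0, cross2]; linear_combination u 1 * hw - w 1 * hu
  obtain ⟨c, hc⟩ := prim φ (crossProduct u w) hprim (by
    intro i j
    match i, j with
    | 0, 0 => rfl
    | 0, 1 => exact h01
    | 0, 2 => exact h20.symm
    | 1, 0 => exact h01.symm
    | 1, 1 => rfl
    | 1, 2 => exact h12
    | 2, 0 => exact h20
    | 2, 1 => exact h12.symm
    | 2, 2 => rfl)
  exact ⟨c, funext hc⟩

theorem cross_zero {u w : Fin 3 → R} (hprim : ∀ p, (∀ i, p ∣ u i) → IsUnit p)
    (h : crossProduct u w = 0) : ∃ f : R, w = f • u := by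
  have h0 := congrFun h 0
  have h1 := congrFun h 1
  have h2 := congrFun h 2
  rw [cross0] at h0
  rw [cross1] at h1
  rw [cross2] at h2
  simp only [Pi.zero_apply, sub_eq_zero] at h0 h1 h2
  obtain ⟨c, hc⟩ := prim u w hprim (by
    intro i j
    match i, j with
    | 0, 0 => rfl
    | 0, 1 => exact h2
    | 0, 2 => exact h1.symm
    | 1, 0 => exact h2.symm
    | 1, 1 => rfl
    | 1, 2 => exact h0
    | 2, 0 => exact h1
    | 2, 1 => exact h0.symm
    | 2, 2 => rfl)
  exact ⟨c, funext hc⟩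

/-- the ideal of `λ` with `u × w = λ φ`, `w` a syzygy -/
noncomputable def JJ (φ u : Fin 3 → R) : Ideal R :=
  ((LinearMap.ker (ev φ)).map (crossProduct u)).comap (LinearMap.toSpanSingleton R _ φ)

theorem mem_JJ {φ u : Fin 3 → R} {f : R} :
    f ∈ JJ φ u ↔ ∃ w, ev φ w = 0 ∧ crossProduct u w = f • φ := by
  simp [JJ, Submodule.mem_comap, Submodule.mem_map]

theorem JJ_sat {φ u : Fin 3 → R} (hprim : ∀ p, (∀ i, p ∣ u i) → IsUnit p) (hu0 : u ≠ 0)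
    (hu : ev φ u = 0) (f : R) (hf : ∀ i, X i * f ∈ JJ φ u) : f ∈ JJ φ u := by
  simp only [mem_JJ] at hf
  choose w hw0 hw using hf
  have hpair : ∀ i j, ∃ c : R, (X j : R) • w i - (X i : R) • w j = c • u := by
    intro i j
    apply cross_zero hprim
    rw [map_sub, map_smul, map_smul, hw, hw, smul_smul, smul_smul, ← sub_smul]
    convert zero_smul R φ using 2
    ring
  obtain ⟨c01, h01⟩ := hpair 0 1
  obtain ⟨c12, h12⟩ := hpair 1 2
  obtain ⟨c02, h02⟩ := hpair 0 2
  obtain ⟨i, hi⟩ : ∃ i, u i ≠ 0 := by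
    by_contra! h
    exact hu0 (funext h)
  have hrel : X 2 * c01 = X 1 * c02 - X 0 * c12 := by
    apply mul_right_cancel₀ hi
    have e1 := congrFun h01 i
    have e2 := congrFun h12 i
    have e3 := congrFun h02 i
    simp only [Pi.sub_apply, Pi.smul_apply, smul_eq_mul] at e1 e2 e3
    linear_combination (-(X 2 : R)) * e1 + (X 1 : R) * e3 - (X 0 : R) * e2
  obtain ⟨p, q, hpq⟩ := X2_reg _ _ _ hrel
  have hkey : ∀ j, X 1 * (w 0 j - p * u j) = X 0 * (w 1 j - q * u j) := by
    intro j
    have e1 := congrFun h01 j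
    simp only [Pi.sub_apply, Pi.smul_apply, smul_eq_mul] at e1
    rw [hpq] at e1
    linear_combination e1
  have hdvd : ∀ j, (X 0 : R) ∣ w 0 j - p * u j := by
    intro j
    have h1 : (X 0 : R) ∣ X 1 * (w 0 j - p * u j) := ⟨_, hkey j⟩
    rcases (X_prime : Prime (X 0 : R)).dvd_or_dvd h1 with h | h
    · rw [X_dvd_X] at h
      simp at h
    · exact h
  choose w' hw' using hdvd
  have hX : (X 0 : R) ≠ 0 := X_ne_zero _
  have hww : w 0 - p • u = (X 0 : R) • w' := funext fun j => hw' j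
  have hinj := smul_right_injective (Fin 3 → R) hX
  rw [mem_JJ]
  refine ⟨w', ?_, ?_⟩
  · have := congrArg (ev φ) hww
    rw [map_sub, map_smul, map_smul, hw0, hu] at this
    simpa [hX] using this.symm
  · have := congrArg (crossProduct u) hww
    rw [map_sub, map_smul, map_smul, hw, cross_self, smul_zero, sub_zero, mul_smul] at this
    exact (hinj this).symm

theorem exists_nzd [Infinite k] (J : Ideal R) (hsat : ∀ f : R, (∀ i, X i * f ∈ J) → f ∈ J) :
    ∃ l : R, l.IsHomogeneous 1 ∧ ∀ f, l * f ∈ J → f ∈ J := by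
  classical
  have hfin := associatedPrimes.finite R (R ⧸ J)
  let s : Finset (Subspace k (homogeneousSubmodule (Fin 3) k 1)) :=
    hfin.toFinset.image fun P =>
      (P.restrictScalars k).comap (homogeneousSubmodule (Fin 3) k 1).subtype
  have hs : ⊤ ∉ s := by
    intro h
    obtain ⟨P, hP, hPt⟩ := Finset.mem_image.1 h
    rw [Set.Finite.mem_toFinset, AssociatedPrimes.mem_iff, isAssociatedPrime_iff] at hP
    obtain ⟨hPp, x, hx⟩ := hP
    have hXP : ∀ i, (X i : R) ∈ P := by
      intro i
      have : (⟨X i, isHomogeneous_X k i⟩ : homogeneousSubmodule (Fin 3) k 1) ∈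
        (⊤ : Subspace k (homogeneousSubmodule (Fin 3) k 1)) := trivial
      rw [← hPt] at this
      exact this
    obtain ⟨f, rfl⟩ := Ideal.Quotient.mk_surjective x
    have hf : f ∈ J := by
      apply hsat
      intro i
      have := hXP i
      rw [hx, Submodule.mem_colon_singleton, Submodule.mem_bot] at this
      rw [← Ideal.Quotient.eq_zero_iff_mem, map_mul]
      exact this
    apply hPp.ne_top
    rw [hx, Ideal.Quotient.eq_zero_iff_mem.2 hf]
    simp
  have hne := Subspace.biUnion_ne_univ_of_top_notMem hs
  obtain ⟨l, hl⟩ := (Set.ne_univ_iff_exists_notMem _).1 hne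
  refine ⟨l.1, l.2, fun f hf => ?_⟩
  by_contra hfJ
  have hz : (l.1 : R) ∈ ⋃ p ∈ associatedPrimes R (R ⧸ J), (p : Set R) := by
    rw [biUnion_associatedPrimes_eq_zero_divisors]
    refine ⟨Ideal.Quotient.mk J f, fun h => hfJ (Ideal.Quotient.eq_zero_iff_mem.1 h), ?_⟩
    exact Ideal.Quotient.eq_zero_iff_mem.2 hf
  apply hl
  simp only [Set.mem_iUnion] at hz ⊢
  obtain ⟨P, hP, hlP⟩ := hz
  exact ⟨_, Finset.mem_image.2 ⟨P, hfin.mem_toFinset.2 hP, rfl⟩, hlP⟩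

instance finHF (J : Ideal R) (m : ℕ) : FiniteDimensional k
    ((homogeneousSubmodule (Fin 3) k m).map (Ideal.Quotient.mkₐ k J).toLinearMap) :=
  inferInstance

theorem HF_mono [Infinite k] (J : Ideal R) (hsat : ∀ f : R, (∀ i, X i * f ∈ J) → f ∈ J) :
    Monotone (HF J) := by
  obtain ⟨l, hl, hreg⟩ := exists_nzd J hsat
  apply monotone_nat_of_le_succ
  intro n
  let g : (R ⧸ J) →ₗ[k] (R ⧸ J) := LinearMap.mulLeft k (Ideal.Quotient.mk J l)
  have hg : Function.Injective g := by
    rw [← LinearMap.ker_eq_bot, LinearMap.ker_eq_bot']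
    intro x hx
    obtain ⟨f, rfl⟩ := Ideal.Quotient.mk_surjective x
    rw [LinearMap.mulLeft_apply, ← map_mul, Ideal.Quotient.eq_zero_iff_mem] at hx
    exact Ideal.Quotient.eq_zero_iff_mem.2 (hreg f hx)
  unfold HF
  rw [← finrank_map_inj _ g hg]
  apply Submodule.finrank_mono
  rintro _ ⟨_, ⟨f, hf, rfl⟩, rfl⟩
  refine ⟨l * f, ?_, ?_⟩
  · rw [add_comm]; exact hl.mul hf
  · simp [g]

theorem hilbJ {r q : ℕ} {φ u : Fin 3 → R} (hφ : ∀ i, (φ i).IsHomogeneous (r + q))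
    (hprimφ : ∀ p, (∀ i, p ∣ φ i) → IsUnit p)
    (hprim : ∀ p, (∀ i, p ∣ u i) → IsUnit p) (hφ0 : φ ≠ 0) (hu0 : u ≠ 0)
    (hu : ev φ u = 0) (hur : ∀ i, (u i).IsHomogeneous r) (a : ℕ) :
    Module.finrank k (Nm φ (a + (r + q))) + HF (JJ φ u) (a + r) =
      Module.finrank k (homogeneousSubmodule (Fin 3) k (a + q)) +
      Module.finrank k (homogeneousSubmodule (Fin 3) k (a + r)) := by
  have h1 := finrank_map_add (Nm φ (a + (r + q))) ((crossProduct u).restrictScalars k)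
  have injs : ∀ v : Fin 3 → R, v ≠ 0 →
      Function.Injective ((LinearMap.toSpanSingleton R _ v).restrictScalars k) := by
    intro v hv x y hxy
    exact smul_left_injective R hv hxy
  have h2 : (Nm φ (a + (r + q))).map ((crossProduct u).restrictScalars k) =
      (homogeneousSubmodule (Fin 3) k (a + r) ⊓ (JJ φ u).restrictScalars k).map
        ((LinearMap.toSpanSingleton R _ φ).restrictScalars k) := by
    ext z
    simp only [Submodule.mem_map, mem_Nm, Submodule.mem_inf, mem_homogeneousSubmodule,
      LinearMap.restrictScalars_apply, Submodule.restrictScalars_mem,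
      LinearMap.toSpanSingleton_apply]
    constructor
    · rintro ⟨w, ⟨hw, hw0⟩, rfl⟩
      obtain ⟨f, hf⟩ := cross_par hprimφ hu hw0
      have hff : homogeneousComponent (a + r) f = f := by
        have h3 := cross_hc hur (a + (r + q)) w
        rw [hc_self hw, hf, show a + (r + q) + r = a + r + (r + q) by ring, hc_smul hφ] at h3
        exact (smul_left_injective R hφ0 h3).symm
      refine ⟨f, ⟨?_, mem_JJ.2 ⟨w, hw0, hf⟩⟩, hf.symm⟩
      rw [← hff]; exact homogeneousComponent_isHomogeneous _ _
    · rintro ⟨f, ⟨hf, hfJ⟩, rfl⟩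
      obtain ⟨w, hw0, hw⟩ := mem_JJ.1 hfJ
      refine ⟨hc (a + (r + q)) w, ⟨hc_hom _ _, ?_⟩, ?_⟩
      · rw [ev_hc hφ, hw0, map_zero]
      · rw [cross_hc hur, hw, show a + (r + q) + r = a + r + (r + q) by ring, hc_smul hφ,
          homogeneousComponent_eq_self hf]
  have h3 : Nm φ (a + (r + q)) ⊓ LinearMap.ker ((crossProduct u).restrictScalars k) =
      (homogeneousSubmodule (Fin 3) k (a + q)).map
        ((LinearMap.toSpanSingleton R _ u).restrictScalars k) := by
    ext w
    simp only [Submodule.mem_map, mem_Nm, Submodule.mem_inf, mem_homogeneousSubmodule,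
      LinearMap.restrictScalars_apply, LinearMap.mem_ker, LinearMap.toSpanSingleton_apply]
    constructor
    · rintro ⟨⟨hw, hw0⟩, hc0⟩
      obtain ⟨f, rfl⟩ := cross_zero hprim hc0
      refine ⟨homogeneousComponent (a + q) f, homogeneousComponent_isHomogeneous _ _, ?_⟩
      rw [← hc_smul hur, show a + q + r = a + (r + q) by ring, hc_self hw]
    · rintro ⟨f, hf, rfl⟩
      refine ⟨⟨fun i => ?_, by rw [map_smul, hu, smul_zero]⟩, by rw [map_smul, cross_self, smul_zero]⟩
      have := hf.mul (hur i)
      rwa [show a + q + r = a + (r + q) by ring] at this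
  rw [h2, h3, finrank_map_inj _ _ (injs _ hφ0), finrank_map_inj _ _ (injs _ hu0)] at h1
  have h4 := HF_add (JJ φ u) (a + r)
  omega

theorem koszul_mem {e : ℕ} {φ : Fin 3 → R} (hφ : ∀ i, (φ i).IsHomogeneous e) (hφ0 : φ ≠ 0) :
    ∃ w : Fin 3 → R, w ≠ 0 ∧ (∀ i, (w i).IsHomogeneous e) ∧ ev φ w = 0 := by
  have z := isHomogeneous_zero (Fin 3) k e
  by_cases h : φ 0 = 0 ∧ φ 1 = 0
  · refine ⟨![φ 2, 0, -φ 0], ?_, ?_, ?_⟩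
    · intro hw
      apply hφ0
      have := congrFun hw 0
      simp at this
      ext1 i
      fin_cases i
      · exact h.1
      · exact h.2
      · exact this
    · intro i
      fin_cases i
      · exact hφ 2
      · exact z
      · exact (hφ 0).neg
    · rw [ev_apply, Fin.sum_univ_three]; simp; ring
  · refine ⟨![φ 1, -φ 0, 0], ?_, ?_, ?_⟩
    · intro hw
      apply h
      have h0 := congrFun hw 0
      have h1 := congrFun hw 1
      simp at h0 h1
      exact ⟨h1, h0⟩
    · intro i
      fin_cases i
      · exact hφ 1
      · exact (hφ 0).neg
      · exact z
    · rw [ev_apply, Fin.sum_univ_three]; simp; ring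

theorem u_mem_JJ {φ u : Fin 3 → R} (hu : ev φ u = 0) (i : Fin 3) : u i ∈ JJ φ u := by
  rw [ev_apply, Fin.sum_univ_three] at hu
  rw [mem_JJ]
  fin_cases i
  · refine ⟨![0, φ 2, -φ 1], by rw [ev_apply, Fin.sum_univ_three]; simp; ring, ?_⟩
    ext1 j
    fin_cases j
    · simp [cross0]; linear_combination -hu
    · simp [cross1]
    · simp [cross2]
  · refine ⟨![-φ 2, 0, φ 0], by rw [ev_apply, Fin.sum_univ_three]; simp; ring, ?_⟩
    ext1 j
    fin_cases j
    · simp [cross0]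
    · simp [cross1]; linear_combination -hu
    · simp [cross2]
  · refine ⟨![φ 1, -φ 0, 0], by rw [ev_apply, Fin.sum_univ_three]; simp; ring, ?_⟩
    ext1 j
    fin_cases j
    · simp [cross0]
    · simp [cross1]
    · simp [cross2]; linear_combination -hu

theorem exists_min {e : ℕ} {φ : Fin 3 → R} (hφ : ∀ i, (φ i).IsHomogeneous e) (hφ0 : φ ≠ 0) :
    ∃ (r : ℕ) (u : Fin 3 → R), r ≤ e ∧ u ≠ 0 ∧ (∀ i, (u i).IsHomogeneous r) ∧ ev φ u = 0 ∧
      (∀ p, (∀ i, p ∣ u i) → IsUnit p) ∧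
      (∀ n (w : Fin 3 → R), n < r → (∀ i, (w i).IsHomogeneous n) → ev φ w = 0 → w = 0) := by
  classical
  have hex : ∃ n, ∃ w : Fin 3 → R, w ≠ 0 ∧ (∀ i, (w i).IsHomogeneous n) ∧ ev φ w = 0 :=
    ⟨e, koszul_mem hφ hφ0⟩
  obtain ⟨u, hu0, hur, hu⟩ := Nat.find_spec hex
  have hmin : ∀ n (w : Fin 3 → R), n < Nat.find hex → (∀ i, (w i).IsHomogeneous n) →
      ev φ w = 0 → w = 0 := by
    intro n w hn hw hw0
    by_contra hne
    exact Nat.find_min hex hn ⟨w, hne, hw, hw0⟩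
  refine ⟨Nat.find hex, u, Nat.find_min' hex (koszul_mem hφ hφ0), hu0, hur, hu, ?_, hmin⟩
  intro g hg
  choose u' hu' using hg
  have huu : u = g • u' := funext hu'
  obtain ⟨i, hi⟩ : ∃ i, u i ≠ 0 := by
    by_contra! h
    exact hu0 (funext h)
  have hg0 : g ≠ 0 := by rintro rfl; apply hi; simp [hu']
  have hi' : u' i ≠ 0 := by intro h; apply hi; simp [hu', h]
  have hev : ev φ u' = 0 := by
    rw [huu, map_smul, smul_eq_mul] at hu
    exact (mul_eq_zero.1 hu).resolve_left hg0
  obtain ⟨d, hd⟩ := (support_nonempty (p := u' i)).2 hi'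
  have hne : hc d.degree u' ≠ 0 := by
    intro h
    have h1 := congrArg (coeff d) (congrFun h i)
    rw [hc, coeff_homogeneousComponent, if_pos rfl] at h1
    exact mem_support_iff.1 hd (by simpa using h1)
  have hle : Nat.find hex ≤ d.degree := by
    by_contra! hlt
    exact hne (hmin _ _ hlt (hc_hom _ _) (by rw [ev_hc hφ, hev, map_zero]))
  have hle2 : d.degree ≤ (u' i).totalDegree := by
    have := le_totalDegree hd
    rwa [Finsupp.degree_apply]
  have htd := totalDegree_mul_of_isDomain hg0 hi'
  rw [← hu', (hur i).totalDegree hi] at htd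
  have hgd : g.totalDegree = 0 := by omega
  rw [totalDegree_eq_zero_iff_eq_C] at hgd
  rw [hgd] at hg0 ⊢
  refine (IsUnit.mk0 _ ?_).map C
  intro h
  rw [h] at hg0
  simp at hg0

theorem HF_top (m : ℕ) : HF (⊤ : Ideal R) m = 0 := by
  unfold HF
  have : Subsingleton (R ⧸ (⊤ : Ideal R)) := Ideal.Quotient.subsingleton_iff.2 rfl
  exact Module.finrank_zero_of_subsingleton

theorem HF_zero {J : Ideal R} (h : HF J 0 = 0) : (1 : R) ∈ J := by
  unfold HF at h
  rw [Submodule.finrank_eq_zero] at h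
  have : (Ideal.Quotient.mkₐ k J).toLinearMap 1 ∈
      (homogeneousSubmodule (Fin 3) k 0).map (Ideal.Quotient.mkₐ k J).toLinearMap :=
    Submodule.mem_map_of_mem (isHomogeneous_one _ _)
  rw [h, Submodule.mem_bot] at this
  exact Ideal.Quotient.eq_zero_iff_mem.1 this

theorem main_fwd [Infinite k] {e : ℕ} (he : 1 ≤ e) {φ : Fin 3 → R}
    (hφ : ∀ i, (φ i).IsHomogeneous e) (hprimφ : ∀ p, (∀ i, p ∣ φ i) → IsUnit p)
    (hH : ∀ᶠ m in atTop, (HF (Ideal.span (Set.range φ)) m : ℤ) = (e : ℤ) ^ 2 - ((e : ℤ) - 1)) :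
    ∃ u v : Fin 3 → R, ev φ u = 0 ∧ ev φ v = 0 ∧
      (∀ i, (u i).IsHomogeneous 1) ∧ (∀ i, (v i).IsHomogeneous (e - 1)) ∧
      (∀ a b : R, a • u + b • v = 0 → a = 0 ∧ b = 0) ∧
      (∀ w, ev φ w = 0 → ∃ a b : R, a • u + b • v = w) := by
  have hφ0 : φ ≠ 0 := by
    rintro rfl
    exact not_isUnit_zero (hprimφ 0 fun i => by simp)
  obtain ⟨r, u, hre, hu0, hur, hu, hprim, hmin⟩ := exists_min hφ hφ0
  obtain ⟨q, rfl⟩ := Nat.exists_eq_add_of_le hre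
  have hmono := HF_mono (JJ φ u) (JJ_sat hprim hu0 hu)
  obtain ⟨M, hM⟩ := eventually_atTop.1 hH
  have hJ : ∀ a, M ≤ a → (HF (JJ φ u) (a + r) : ℤ) = r + q - 1 - r * q := by
    intro a ha
    have h1 := hM (a + (r + q) + (r + q)) (by omega)
    have h2 := hilbI hφ (a + (r + q))
    have h3 := hilbJ hφ hprimφ hprim hφ0 hu0 hu hur a
    have d1 := finrank_H' (k := k) (a + (r + q))
    have d2 := finrank_H' (k := k) (a + (r + q) + (r + q))
    have d3 := finrank_H' (k := k) (a + q)
    have d4 := finrank_H' (k := k) (a + r)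
    zify at h2 h3
    push_cast at h1 h2 h3 d1 d2 d3 d4
    rw [h1] at h2
    apply mul_left_cancel₀ (two_ne_zero (α := ℤ))
    linear_combination 2 * h3 + 2 * h2 + d2 - 3 * d1 + d3 + d4
  -- the case distinction
  have hcases : HF (JJ φ u) (M + r) = 0 := by
    by_contra hne
    have hpos : (1 : ℤ) ≤ HF (JJ φ u) (M + r) := by exact_mod_cast Nat.one_le_iff_ne_zero.2 hne
    have hr : 1 ≤ r := by
      by_contra! hr
      have hr0 : r = 0 := by omega
      obtain ⟨i, hi⟩ : ∃ i, u i ≠ 0 := by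
        by_contra! h
        exact hu0 (funext h)
      have h1 : IsUnit (u i) := by
        have htd := (hur i).totalDegree hi
        rw [hr0, totalDegree_eq_zero_iff_eq_C] at htd
        rw [htd]
        refine (IsUnit.mk0 _ ?_).map C
        intro h
        rw [h] at htd
        exact hi (by rw [htd, C_0])
      have htop := Ideal.eq_top_of_isUnit_mem _ (u_mem_JJ hu i) h1
      exact hne (by rw [htop, HF_top])
    have hq : q = 0 := by
      by_contra hq
      have hq : 1 ≤ q := Nat.one_le_iff_ne_zero.2 hq
      rw [hJ M le_rfl] at hpos
      zify at hr hq
      nlinarith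
    subst hq
    have hb : homogeneousSubmodule (Fin 3) k (r - 1) ⊓ (JJ φ u).restrictScalars k = ⊥ := by
      rw [eq_bot_iff]
      rintro f ⟨hf, hfJ⟩
      obtain ⟨w, hw0, hw⟩ := mem_JJ.1 hfJ
      have h1 : hc (r - 1) w = 0 := hmin (r - 1) _ (by omega) (hc_hom _ _)
        (by rw [ev_hc hφ, hw0, map_zero])
      have h2 := cross_hc hur (r - 1) w
      have h3 := hc_smul hφ (r - 1) f
      rw [add_zero] at h3
      rw [h1, map_zero, hw, h3, homogeneousComponent_eq_self hf] at h2
      exact (smul_eq_zero.1 h2.symm).resolve_right hφ0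
    have h1 := HF_add (JJ φ u) (r - 1)
    rw [hb, finrank_bot, add_zero] at h1
    have h2 := finrank_H' (k := k) (r - 1)
    rw [← h1] at h2
    have h3 : HF (JJ φ u) (r - 1) ≤ HF (JJ φ u) (M + r) := hmono (by omega)
    have h4 := hJ M le_rfl
    zify at h3
    push_cast [Nat.cast_sub hr] at h2 h4
    nlinarith
  have hone : (1 : R) ∈ JJ φ u := by
    apply HF_zero
    have : HF (JJ φ u) 0 ≤ HF (JJ φ u) (M + r) := hmono (by omega)
    omega
  have hrq : ((r : ℤ) - 1) * (q - 1) = 0 := by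
    have := hJ M le_rfl
    rw [hcases] at this
    push_cast at this
    linear_combination this
  obtain ⟨w, hw0, hw⟩ := mem_JJ.1 hone
  have hv : crossProduct u (hc q w) = φ := by
    have h3 := hc_smul hφ 0 1
    rw [zero_add] at h3
    rw [cross_hc hur, hw, add_comm, h3, homogeneousComponent_eq_self (isHomogeneous_one _ _),
      one_smul]
  have hv0 : ev φ (hc q w) = 0 := by rw [ev_hc hφ, hw0, map_zero]
  have hvq := hc_hom q w
  generalize hc q w = v at hv hv0 hvq
  have hli : ∀ a b : R, a • u + b • v = 0 → a = 0 ∧ b = 0 := by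
    intro a b hab
    have h1 := congrArg (crossProduct u) hab
    rw [map_add, map_smul, map_smul, cross_self, hv, smul_zero, zero_add, map_zero] at h1
    have hb := (smul_eq_zero.1 h1).resolve_right hφ0
    rw [hb, zero_smul, add_zero] at hab
    exact ⟨(smul_eq_zero.1 hab).resolve_right hu0, hb⟩
  have hgen : ∀ w, ev φ w = 0 → ∃ a b : R, a • u + b • v = w := by
    intro w hw
    obtain ⟨f, hf⟩ := cross_par hprimφ hu hw
    obtain ⟨g, hg⟩ := cross_zero (w := w - f • v) hprim (by
      rw [map_sub, map_smul, hv, hf, sub_self])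
    exact ⟨g, f, by rw [← hg]; abel⟩
  rcases mul_eq_zero.1 hrq with h | h
  · have hr : r = 1 := by omega
    subst hr
    refine ⟨u, v, hu, hv0, hur, ?_, hli, hgen⟩
    rwa [Nat.add_sub_cancel_left]
  · have hq : q = 1 := by omega
    subst hq
    refine ⟨v, u, hv0, hu, hvq, ?_, ?_, ?_⟩
    · rwa [Nat.add_sub_cancel]
    · intro a b hab
      exact (hli b a (by rw [← hab, add_comm])).symm
    · intro w hw
      obtain ⟨a, b, hab⟩ := hgen w hw
      exact ⟨b, a, by rw [← hab, add_comm]⟩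

theorem main_bwd {e : ℕ} (he : 1 ≤ e) {φ : Fin 3 → R}
    (hφ : ∀ i, (φ i).IsHomogeneous e) {u v : Fin 3 → R}
    (hu : ev φ u = 0) (hv : ev φ v = 0)
    (hur : ∀ i, (u i).IsHomogeneous 1) (hvq : ∀ i, (v i).IsHomogeneous (e - 1))
    (hli : ∀ a b : R, a • u + b • v = 0 → a = 0 ∧ b = 0)
    (hN : ∀ w, ev φ w = 0 → ∃ a b : R, a • u + b • v = w) :
    ∀ᶠ m in atTop, (HF (Ideal.span (Set.range φ)) m : ℤ) = (e : ℤ) ^ 2 - ((e : ℤ) - 1) := by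
  obtain ⟨q, rfl⟩ := Nat.exists_eq_add_of_le he
  rw [Nat.add_sub_cancel_left] at hvq
  refine eventually_atTop.2 ⟨2 * (1 + q), fun m hm => ?_⟩
  obtain ⟨a, rfl⟩ : ∃ a, m = a + (1 + q) + (1 + q) := ⟨m - 2 * (1 + q), by omega⟩
  have h2 := hilbI hφ (a + (1 + q))
  have h3 := free_N hu hv hur hvq hli hN a
  have d1 := finrank_H' (k := k) (a + (1 + q))
  have d2 := finrank_H' (k := k) (a + (1 + q) + (1 + q))
  have d3 := finrank_H' (k := k) (a + q)
  have d4 := finrank_H' (k := k) (a + 1)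
  zify at h2 h3
  push_cast at h2 h3 d1 d2 d3 d4 ⊢
  apply mul_left_cancel₀ (two_ne_zero (α := ℤ))
  linear_combination 2 * h3 + 2 * h2 + d2 - 3 * d1 + d3 + d4

end main
end FreeCrit

theorem stmt1 (k : Type*) [Field k] [IsAlgClosed k] (d : ℕ) (hd : 2 ≤ d)
    (φ : Fin 3 → MvPolynomial (Fin 3) k)
    (hφ : ∀ i, (φ i).IsHomogeneous (d - 1))
    (I : Ideal (MvPolynomial (Fin 3) k))
    (hI : I = Ideal.span (Set.range φ))
    (hdim : ringKrullDim (MvPolynomial (Fin 3) k ⧸ I) ≤ 1) :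
    (∀ᶠ m in atTop,
        (Module.finrank k
            ((homogeneousSubmodule (Fin 3) k m).map
              (Ideal.Quotient.mkₐ k I).toLinearMap) : ℤ)
          = ((d : ℤ) - 1) ^ 2 - ((d : ℤ) - 2))
    ↔ ∃ u v : Fin 3 → MvPolynomial (Fin 3) k,
        (∑ i, u i * φ i = 0) ∧ (∑ i, v i * φ i = 0) ∧
        (∀ i, (u i).IsHomogeneous 1) ∧ (∀ i, (v i).IsHomogeneous (d - 2)) ∧
        LinearIndependent (MvPolynomial (Fin 3) k) ![u, v] ∧
        (∀ w : Fin 3 → MvPolynomial (Fin 3) k,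
          (∑ i, w i * φ i = 0) ↔
            w ∈ Submodule.span (MvPolynomial (Fin 3) k) {u, v}) := by
  obtain ⟨e, rfl⟩ : ∃ e, d = e + 1 := ⟨d - 1, by omega⟩
  have he : 1 ≤ e := by omega
  rw [Nat.add_sub_cancel] at hφ
  subst hI
  have : Infinite k := IsAlgClosed.instInfinite
  have hprim := FreeCrit.phi_prim φ hφ hdim
  have e1 : e + 1 - 2 = e - 1 := by omega
  have e2 : (((e + 1 : ℕ) : ℤ) - 1) ^ 2 - (((e + 1 : ℕ) : ℤ) - 2) = (e : ℤ) ^ 2 - ((e : ℤ) - 1) := by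
    push_cast; ring
  rw [e1, e2]
  simp only [← FreeCrit.ev_apply, LinearIndependent.pair_iff, Submodule.mem_span_pair]
  constructor
  · intro h
    obtain ⟨u, v, hu, hv, hur, hvq, hli, hN⟩ := FreeCrit.main_fwd he hφ hprim h
    refine ⟨u, v, hu, hv, hur, hvq, hli, fun w => ⟨hN w, ?_⟩⟩
    rintro ⟨a, b, rfl⟩
    simp [hu, hv]
  · rintro ⟨u, v, hu, hv, hur, hvq, hli, hN⟩
    exact FreeCrit.main_bwd he hφ hu hv hur hvq hli fun w hw => (hN w).1 hw
end

section
/- Let k be an algebraically closed field, d ≥ 6 an integer, and φ₀, φ₁, φ₂ ∈ R = k[x,y,z] homogeneous polynomials of degree d−1 generating the ideal I = (φ₀, φ₁, φ₂). Assume the Krull dimension of R/I is at most 1. Then dim_k (R/I)_m = (d−1)² − (d−1) for all sufficiently large m (i.e., (d−1)² − τ(Z) = d−1, which translates the condition −c₁(E) = c₂(E)) if and only if the sheaf of relations E is nearly free of exponents (1, d−1), i.e., if and only if there exist syzygies u, v₁, v₂ ∈ N, with u homogeneous of degree 1 and v₁, v₂ homogeneous of degree d−1, such that N = R·u + R·v₁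 + R·v₂ and the relation module {(a,b,c) ∈ R³ : a·u + b·v₁ + c·v₂ = 0 in R³} is generated by a single nonzero element (a,b,c) with a homogeneous of degree d−1 and b, c homogeneous of degree 1. -/
open MvPolynomial Filter


section basics
variable {k : Type*} [Field k] {σ : Type*}

noncomputable def psi (k : Type*) [Field k] (σ : Type*) :
    MvPolynomial σ k →ₐ[k] Polynomial (MvPolynomial σ k) :=
  aeval (fun i => Polynomial.C (X i) * Polynomial.X)

lemma psi_monomial (s : σ →₀ ℕ) (c : k) :
    psi k σ (monomial s c) = Polynomial.C (monomial s c) * Polynomial.X ^ s.degree := by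
  rw [psi, aeval_monomial]
  simp only [mul_pow, Finsupp.prod]
  rw [Finset.prod_mul_distrib, Finset.prod_pow_eq_pow_sum, monomial_eq, Finsupp.degree_apply]
  simp only [Finsupp.prod, map_mul, map_prod, map_pow]
  rw [mul_assoc]
  rfl

lemma psi_coeff (f : MvPolynomial σ k) (j : ℕ) :
    (psi k σ f).coeff j = homogeneousComponent j f := by
  induction f using MvPolynomial.induction_on' with
  | monomial s c =>
    rw [psi_monomial, Polynomial.coeff_C_mul_X_pow,
      homogeneousComponent_of_mem (isHomogeneous_monomial c rfl)]
  | add p q hp hq => simp [hp, hq]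

lemma psi_of_hom {f : MvPolynomial σ k} {n : ℕ} (h : f.IsHomogeneous n) :
    psi k σ f = Polynomial.C f * Polynomial.X ^ n := by
  ext1 j
  rw [psi_coeff, Polynomial.coeff_C_mul_X_pow, homogeneousComponent_of_mem h]

lemma comp_mul {t r : MvPolynomial σ k} {n : ℕ} (m : ℕ) (h : r.IsHomogeneous n) :
    homogeneousComponent (m + n) (t * r) = homogeneousComponent m t * r := by
  rw [← psi_coeff, map_mul, psi_of_hom h, ← mul_assoc, Polynomial.coeff_mul_X_pow,
    Polynomial.coeff_mul_C, psi_coeff]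

lemma psi_inj {f : MvPolynomial σ k} (h : psi k σ f = 0) : f = 0 := by
  have : ∀ j, homogeneousComponent j f = 0 := fun j => by rw [← psi_coeff, h]; simp
  rw [← sum_homogeneousComponent f]
  simp [this]

lemma hom_of_mul {a b : MvPolynomial σ k} {n : ℕ} (h : (a * b).IsHomogeneous n)
    (h0 : a * b ≠ 0) : ∃ i j, i + j = n ∧ a.IsHomogeneous i ∧ b.IsHomogeneous j := by
  have ha : a ≠ 0 := left_ne_zero_of_mul h0
  have hb : b ≠ 0 := right_ne_zero_of_mul h0
  have ha' : psi k σ a ≠ 0 := fun h => ha (psi_inj h)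
  have hb' : psi k σ b ≠ 0 := fun h => hb (psi_inj h)
  have e := psi_of_hom h
  rw [map_mul] at e
  have d1 := congrArg Polynomial.natDegree e
  have d2 := congrArg Polynomial.natTrailingDegree e
  rw [Polynomial.natDegree_mul ha' hb', Polynomial.natDegree_C_mul_X_pow _ _ h0] at d1
  rw [Polynomial.natTrailingDegree_mul ha' hb', Polynomial.C_mul_X_pow_eq_monomial,
    Polynomial.natTrailingDegree_monomial h0] at d2
  have key : ∀ f : MvPolynomial σ k, (psi k σ f).natDegree = (psi k σ f).natTrailingDegree →
      f.IsHomogeneous (psi k σ f).natDegree := by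
    intro f hf
    have : f = homogeneousComponent (psi k σ f).natDegree f := by
      conv_lhs => rw [← sum_homogeneousComponent f]
      rw [Finset.sum_eq_single (psi k σ f).natDegree]
      · intro j _ hj
        rw [← psi_coeff]
        rcases lt_or_gt_of_ne hj with h | h
        · exact Polynomial.coeff_eq_zero_of_lt_natTrailingDegree (by omega)
        · exact Polynomial.coeff_eq_zero_of_natDegree_lt h
      · intro hj
        apply homogeneousComponent_eq_zero
        simp at hj; omega
    rw [this]
    conv_rhs => rw [← this]
    exact homogeneousComponent_isHomogeneous _ _
  have l1 := Polynomial.natTrailingDegree_le_natDegree (psi k σ a)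
  have l2 := Polynomial.natTrailingDegree_le_natDegree (psi k σ b)
  exact ⟨_, _, d1, key a (by omega), key b (by omega)⟩

lemma hom_of_mul_right {t p : MvPolynomial σ k} {n i : ℕ} (h : (t * p).IsHomogeneous n)
    (hp : p.IsHomogeneous i) (h0 : p ≠ 0) (ht : t ≠ 0) :
    i ≤ n ∧ t.IsHomogeneous (n - i) := by
  obtain ⟨a, b, hab, h1, h2⟩ := hom_of_mul h (mul_ne_zero ht h0)
  have := h2.inj_right hp h0
  subst this
  refine ⟨by omega, ?_⟩
  rwa [show n - b = a by omega]

lemma finrank_hom [Fintype σ] (n : ℕ) :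
    Module.finrank k (homogeneousSubmodule σ k n) = (Fintype.card σ + n - 1).choose n := by
  classical
  rw [homogeneousSubmodule_eq_finsupp_supported]
  have e := AddMonoidAlgebra.supportedEquivFinsupp (S := k) (R := k) {d : σ →₀ ℕ | d.degree = n}
  have hs : {d : σ →₀ ℕ | d.degree = n} = ↑(Finset.finsuppAntidiag (Finset.univ : Finset σ) n) := by
    ext d; simp [Finset.mem_finsuppAntidiag, Finsupp.degree_eq_sum]
  rw [e.finrank_eq, hs]
  rw [Module.finrank_finsupp_self]
  simp [Finset.card_finsuppAntidiag_nat_eq_choose]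

lemma finrank3 (n : ℕ) :
    2 * Module.finrank k (homogeneousSubmodule (Fin 3) k n) = (n + 1) * (n + 2) := by
  rw [finrank_hom]
  simp only [Fintype.card_fin]
  rw [show 3 + n - 1 = n + 2 by omega, Nat.choose_symm_add, Nat.choose_two_right]
  rw [mul_comm 2, Nat.div_mul_cancel]
  · simp; ring
  · exact (Nat.even_mul_pred_self _).two_dvd

lemma finrank2 (n : ℕ) :
    Module.finrank k (homogeneousSubmodule (Fin 2) k n) = n + 1 := by
  rw [finrank_hom]
  simp only [Fintype.card_fin]
  rw [show 2 + n - 1 = n + 1 by omega, Nat.choose_symm_add, Nat.choose_one_right]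

instance [Finite σ] (n : ℕ) : FiniteDimensional k (homogeneousSubmodule σ k n) :=
  Module.Finite.iff_fg.mpr (homogeneousSubmodule_fg _ _ n)

end basics


section linalg
variable {k : Type*} [Field k] {U V W : Type*} [AddCommGroup V] [Module k V] [AddCommGroup W]
  [Module k W] [AddCommGroup U] [Module k U]

lemma finrank_map_inj (f : V →ₗ[k] W) (h : Function.Injective f) (p : Submodule k V) :
    Module.finrank k (p.map f) = Module.finrank k p :=
  (Submodule.equivMapOfInjective f h p).finrank_eq.symm

lemma la_le (f : V →ₗ[k] W) (p : Submodule k V) (q : Submodule k W) (s : Submodule k V)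
    [FiniteDimensional k p] [FiniteDimensional k q] [FiniteDimensional k s]
    (h1 : ∀ x ∈ p, f x ∈ q) (h2 : ∀ x ∈ p, f x = 0 → x ∈ s) :
    Module.finrank k p ≤ Module.finrank k q + Module.finrank k s := by
  rw [← (f.domRestrict p).finrank_range_add_finrank_ker]
  apply add_le_add
  · apply Submodule.finrank_mono
    rintro _ ⟨x, rfl⟩
    exact h1 x x.2
  · rw [← finrank_map_inj p.subtype p.subtype_injective]
    apply Submodule.finrank_mono
    rintro _ ⟨x, hx, rfl⟩
    exact h2 x x.2 hx

lemma la_inj (f : V →ₗ[k] W) (p : Submodule k W) [FiniteDimensional k V] [FiniteDimensional k p]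
    (h1 : ∀ x, f x ∈ p) (h2 : ∀ x, f x = 0 → x = 0) :
    Module.finrank k V ≤ Module.finrank k p := by
  have : Function.Injective f := (injective_iff_map_eq_zero f).2 h2
  exact LinearMap.finrank_le_finrank_of_injective (f := f.codRestrict p h1)
    (by intro a b h; exact this (congrArg Subtype.val h))

lemma la_exact [FiniteDimensional k V] (g : U →ₗ[k] V) (f : V →ₗ[k] W) (p : Submodule k W)
    (hg : Function.Injective g) (hex : ∀ x, f x = 0 ↔ ∃ y, g y = x)
    (hp : ∀ x, x ∈ p ↔ ∃ y, f y = x) :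
    Module.finrank k V = Module.finrank k p + Module.finrank k U := by
  rw [← f.finrank_range_add_finrank_ker, ← LinearMap.finrank_range_of_inj hg]
  have h1 : LinearMap.range f = p := by ext x; rw [hp]; rfl
  have h2 : LinearMap.ker f = LinearMap.range g := by ext x; rw [LinearMap.mem_ker, hex]; rfl
  rw [h1, h2]
end linalg

section syz
variable {k : Type*} [Field k] {σ : Type*}

/-- homogeneous syzygies of degree `m` -/
def Syz (φ : Fin 3 → MvPolynomial σ k) (m : ℕ) : Submodule k (Fin 3 → MvPolynomial σ k) where
  carrier := {w | (∀ i, (w i).IsHomogeneous m) ∧ ∑ i, w i * φ i = 0}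
  add_mem' := by
    rintro a b ⟨h1, h2⟩ ⟨h3, h4⟩
    refine ⟨fun i => (h1 i).add (h3 i), ?_⟩
    simp [add_mul, Finset.sum_add_distrib, h2, h4]
  zero_mem' := ⟨fun i => isHomogeneous_zero _ _ _, by simp⟩
  smul_mem' := by
    rintro c a ⟨h1, h2⟩
    refine ⟨fun i => (homogeneousSubmodule σ k m).smul_mem c (h1 i), ?_⟩
    simp [← Finset.smul_sum, h2]

lemma mem_Syz {φ : Fin 3 → MvPolynomial σ k} {m : ℕ} {w : Fin 3 → MvPolynomial σ k} :
    w ∈ Syz φ m ↔ (∀ i, (w i).IsHomogeneous m) ∧ ∑ i, w i * φ i = 0 := Iff.rfl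

noncomputable def incl3 (k : Type*) [Field k] (σ : Type*) (m : ℕ) :
    (Fin 3 → homogeneousSubmodule σ k m) →ₗ[k] (Fin 3 → MvPolynomial σ k) :=
  LinearMap.pi fun i => (homogeneousSubmodule σ k m).subtype ∘ₗ LinearMap.proj i

instance [Finite σ] (φ : Fin 3 → MvPolynomial σ k) (m : ℕ) : FiniteDimensional k (Syz φ m) := by
  have : Syz φ m ≤ LinearMap.range (incl3 k σ m) := by
    intro w hw
    exact ⟨fun i => ⟨w i, hw.1 i⟩, rfl⟩
  exact Submodule.finiteDimensional_of_le this

lemma mem_span_hom {φ : Fin 3 → MvPolynomial σ k} {e m : ℕ} (hφ : ∀ i, (φ i).IsHomogeneous e)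
    {x : MvPolynomial σ k} (hx : x.IsHomogeneous (m + e)) (hI : x ∈ Ideal.span (Set.range φ)) :
    ∃ w : Fin 3 → MvPolynomial σ k, (∀ i, (w i).IsHomogeneous m) ∧ ∑ i, w i * φ i = x := by
  rw [Ideal.mem_span_range_iff_exists_fun] at hI
  obtain ⟨c, hc⟩ := hI
  refine ⟨fun i => homogeneousComponent m (c i), fun i => homogeneousComponent_isHomogeneous _ _, ?_⟩
  simp_rw [← comp_mul m (hφ _)]
  rw [← map_sum, hc, homogeneousComponent_eq_self hx]

lemma dim_formula [Finite σ] {φ : Fin 3 → MvPolynomial σ k} {e : ℕ} (m : ℕ)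
    (hφ : ∀ i, (φ i).IsHomogeneous e)
    (I : Ideal (MvPolynomial σ k)) (hI : I = Ideal.span (Set.range φ)) :
    Module.finrank k ((homogeneousSubmodule σ k (m + e)).map
              (Ideal.Quotient.mkₐ k I).toLinearMap)
      + 3 * Module.finrank k (homogeneousSubmodule σ k m)
      = Module.finrank k (homogeneousSubmodule σ k (m + e)) + Module.finrank k (Syz φ m) := by
  subst hI
  set I := Ideal.span (Set.range φ) with hI
  let P : Submodule k (MvPolynomial σ k) := (I.restrictScalars k) ⊓ homogeneousSubmodule σ k (m + e)
  have e1 := la_exact (k := k) (Submodule.inclusion (p := P)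
      (p' := homogeneousSubmodule σ k (m + e)) inf_le_right)
    ((Ideal.Quotient.mkₐ k I).toLinearMap ∘ₗ (homogeneousSubmodule σ k (m + e)).subtype)
    ((homogeneousSubmodule σ k (m + e)).map (Ideal.Quotient.mkₐ k I).toLinearMap)
    (Submodule.inclusion_injective _) ?_ ?_
  rotate_left
  · intro x
    constructor
    · intro h
      have : (x : MvPolynomial σ k) ∈ I := Ideal.Quotient.eq_zero_iff_mem.1 h
      exact ⟨⟨x, this, x.2⟩, rfl⟩
    · rintro ⟨y, rfl⟩
      exact Ideal.Quotient.eq_zero_iff_mem.2 y.2.1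
  · intro x
    constructor
    · rintro ⟨y, hy, rfl⟩
      exact ⟨⟨y, hy⟩, rfl⟩
    · rintro ⟨y, rfl⟩
      exact ⟨y, y.2, rfl⟩
  let Φ : (Fin 3 → MvPolynomial σ k) →ₗ[k] MvPolynomial σ k :=
    { toFun := fun w => ∑ i, w i * φ i
      map_add' := by intro a b; simp [add_mul, Finset.sum_add_distrib]
      map_smul' := by intro c a; simp [← Finset.smul_sum] }
  let g : Syz φ m →ₗ[k] (Fin 3 → homogeneousSubmodule σ k m) :=
    { toFun := fun w i => ⟨w.1 i, w.2.1 i⟩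
      map_add' := by intro a b; rfl
      map_smul' := by intro a b; rfl }
  have e2 := la_exact (k := k) g (Φ ∘ₗ incl3 k σ m) P ?_ ?_ ?_
  rotate_left
  · intro a b h
    ext i : 2
    exact congrArg Subtype.val (congrFun h i)
  · intro x
    constructor
    · intro h
      exact ⟨⟨fun i => x i, fun i => (x i).2, h⟩, rfl⟩
    · rintro ⟨y, rfl⟩
      exact y.2.2
  · intro x
    constructor
    · rintro ⟨h1, h2⟩
      obtain ⟨w, hw, rfl⟩ := mem_span_hom hφ h2 h1
      exact ⟨fun i => ⟨w i, hw i⟩, rfl⟩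
    · rintro ⟨y, rfl⟩
      refine ⟨?_, ?_⟩
      · have h : ∑ i, (y i).1 * φ i ∈ I := Ideal.sum_mem I fun i _ =>
          Ideal.mul_mem_left I ((y i).1) (Ideal.subset_span (Set.mem_range_self i))
        exact h
      · exact IsHomogeneous.sum _ _ _ fun i _ => IsHomogeneous.mul (y i).2 (hφ i)
  rw [Module.finrank_pi_fintype] at e2
  simp only [Finset.sum_const, Finset.card_univ, Fintype.card_fin, smul_eq_mul] at e2
  omega

/-- no common prime factor -/
def Cop {A : Type*} [CommRing A] (x : Fin 3 → A) : Prop := ∀ p, Prime p → ∃ i, ¬ p ∣ x i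

lemma Cop.dvd {A : Type*} [CommRing A] [IsDomain A] [UniqueFactorizationMonoid A] {x : Fin 3 → A}
    (hx : Cop x) (a : A) (ha : a ≠ 0) : ∀ b : A, (∀ i, a ∣ x i * b) → a ∣ b := by
  induction a using UniqueFactorizationMonoid.induction_on_prime with
  | h₁ => exact absurd rfl ha
  | h₂ u hu => intro b _; exact hu.dvd
  | h₃ a p ha0 hp ih =>
    intro b hb
    obtain ⟨i, hi⟩ := hx p hp
    obtain ⟨b', rfl⟩ := (hp.dvd_or_dvd ((dvd_mul_right p a).trans (hb i))).resolve_left hi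
    refine mul_dvd_mul_left p (ih ha0 b' fun j => ?_)
    have := hb j
    rw [mul_left_comm] at this
    exact (mul_dvd_mul_iff_left hp.ne_zero).1 this

lemma Cop.par {A : Type*} [CommRing A] [IsDomain A] [UniqueFactorizationMonoid A] {x y : Fin 3 → A}
    (hx : Cop x) (h0 : x ≠ 0) (h : ∀ i j, x j * y i = x i * y j) : ∃ t, ∀ i, y i = t * x i := by
  obtain ⟨i, hi⟩ := Function.ne_iff.1 h0
  obtain ⟨t, ht⟩ := hx.dvd (x i) hi (y i) fun j => ⟨y j, h i j⟩
  refine ⟨t, fun j => mul_left_cancel₀ hi ?_⟩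
  rw [← h i j, ht]; ring

lemma relprime_syz {A : Type*} [CommRing A] [IsDomain A] [UniqueFactorizationMonoid A] {f g a b : A}
    (h : IsRelPrime f g) (e : a * f + b * g = 0) : ∃ t, a = t * g ∧ b = - t * f := by
  by_cases hg : g = 0
  · subst hg
    obtain ⟨u, rfl⟩ : IsUnit f := h dvd_rfl (dvd_zero _)
    refine ⟨-b * ↑u⁻¹, ?_, ?_⟩
    · simpa using e
    · simp [mul_assoc]
  · have : g ∣ a * f := ⟨-b, by linear_combination e⟩
    obtain ⟨t, rfl⟩ := h.symm.dvd_of_dvd_mul_right this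
    refine ⟨t, mul_comm _ _, mul_left_cancel₀ hg ?_⟩
    linear_combination e

open Classical in
noncomputable def QQ {W : Type*} [AddCommGroup W] [Module k W] (L : MvPolynomial σ k →ₗ[k] W)
    (δ j : ℕ) : Submodule k W := if δ ≤ j then (homogeneousSubmodule σ k (j - δ)).map L else ⊥

instance [Finite σ] {W : Type*} [AddCommGroup W] [Module k W] (L : MvPolynomial σ k →ₗ[k] W)
    (δ j : ℕ) : FiniteDimensional k (QQ L δ j) := by
  by_cases h : δ ≤ j
  · rw [QQ, if_pos h]; infer_instance
  · rw [QQ, if_neg h]; infer_instance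

lemma QQ_mem {W : Type*} [AddCommGroup W] [Module k W] (L : MvPolynomial σ k →ₗ[k] W)
    {δ j : ℕ} {t : MvPolynomial σ k} (ht : t ≠ 0 → δ ≤ j ∧ t.IsHomogeneous (j - δ)) :
    L t ∈ QQ L δ j := by
  by_cases h : t = 0
  · simp [h]
  · obtain ⟨h1, h2⟩ := ht h
    rw [QQ, if_pos h1]
    exact ⟨t, h2, rfl⟩

lemma QQ_finrank2 {W : Type*} [AddCommGroup W] [Module k W] (L : MvPolynomial (Fin 2) k →ₗ[k] W)
    (δ j : ℕ) : Module.finrank k (QQ L δ j) ≤ j + 1 - δ := by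
  by_cases h : δ ≤ j
  · rw [QQ, if_pos h]
    refine (Submodule.finrank_map_le L (homogeneousSubmodule (Fin 2) k (j - δ))).trans ?_
    rw [finrank2]; omega
  · rw [QQ, if_neg h]; simp

lemma unit_hom {f : MvPolynomial σ k} {e : ℕ} (h : IsUnit f) (hf : f.IsHomogeneous e) : e = 0 := by
  obtain ⟨g, hg⟩ := h.exists_right_inv
  have h1 : (f * g).IsHomogeneous 0 := by rw [hg]; exact isHomogeneous_one _ _
  obtain ⟨i, j, hij, h2, h3⟩ := hom_of_mul h1 (by rw [hg]; exact one_ne_zero)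
  have := hf.inj_right h2 h.ne_zero
  omega

lemma Cop.ne_zero [Nonempty σ] {φ : Fin 3 → MvPolynomial σ k} (hc : Cop φ) {e : ℕ}
    (hφ : ∀ i, (φ i).IsHomogeneous e) (he : 0 < e) : φ 0 ≠ 0 ∨ φ 1 ≠ 0 := by
  by_contra! h
  by_cases hu : IsUnit (φ 2)
  · have := unit_hom hu (hφ 2); omega
  · have : ∃ p, Prime p ∧ p ∣ φ 2 := by
      by_cases h2 : φ 2 = 0
      · exact ⟨X (Classical.arbitrary σ), X_prime, by simp [h2]⟩
      · obtain ⟨p, hp, hd⟩ := WfDvdMonoid.exists_irreducible_factor hu h2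
        exact ⟨p, hp.prime, hd⟩
    obtain ⟨p, hp, hd⟩ := this
    obtain ⟨i, hi⟩ := hc p hp
    fin_cases i <;> simp_all

lemma syz2_bound {φ : Fin 3 → MvPolynomial (Fin 2) k} (hc : Cop φ) {e j : ℕ}
    (hφ : ∀ i, (φ i).IsHomogeneous e) (he : 0 < e) (hj : e ≤ j + 1) :
    Module.finrank k (Syz φ j) + e ≤ 2 * j + 2 := by
  have hne := hc.ne_zero hφ he
  obtain ⟨f, g, p, hrel, hf, hg⟩ : ∃ a' b' c', IsRelPrime a' b' ∧ c' * a' = φ 0 ∧ c' * b' = φ 1 := by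
    rcases hne with h | h
    · exact UniqueFactorizationMonoid.exists_reduced_factors _ h _
    · exact UniqueFactorizationMonoid.exists_reduced_factors' _ _ h
  have hp0 : p ≠ 0 := by
    rintro rfl
    simp at hf hg
    rcases hne with h | h
    · exact h hf.symm
    · exact h hg.symm
  obtain ⟨δ, hδ, hp⟩ : ∃ δ, δ ≤ e ∧ p.IsHomogeneous δ := by
    rcases hne with h | h
    · have := hφ 0
      rw [← hf] at this h
      obtain ⟨i, j, h1, h2, h3⟩ := hom_of_mul this h
      exact ⟨i, by omega, h2⟩
    · have := hφ 1
      rw [← hg] at this h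
      obtain ⟨i, j, h1, h2, h3⟩ := hom_of_mul this h
      exact ⟨i, by omega, h2⟩
  have quo : ∀ a, (p * a).IsHomogeneous e → a.IsHomogeneous (e - δ) := by
    intro a ha
    by_cases h : a = 0
    · rw [h]; exact isHomogeneous_zero _ _ _
    · rw [mul_comm] at ha
      exact (hom_of_mul_right ha hp hp0 h).2
  have hfh : f.IsHomogeneous (e - δ) := quo f (hf ▸ hφ 0)
  have hgh : g.IsHomogeneous (e - δ) := quo g (hg ▸ hφ 1)
  let L1 : MvPolynomial (Fin 2) k →ₗ[k] MvPolynomial (Fin 2) k := LinearMap.mulRight k p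
  let L2 : MvPolynomial (Fin 2) k →ₗ[k] (Fin 3 → MvPolynomial (Fin 2) k) :=
    LinearMap.pi fun i => LinearMap.mulRight k (![g, -f, 0] i)
  have key := la_le (LinearMap.proj 2) (Syz φ j) (QQ L1 δ j) (QQ L2 (e - δ) j) ?_ ?_
  · have h1 := QQ_finrank2 L1 δ j
    have h2 := QQ_finrank2 L2 (e - δ) j
    omega
  · rintro x ⟨hx1, hx2⟩
    rw [Fin.sum_univ_three] at hx2
    obtain ⟨t, ht⟩ := hc.dvd p hp0 (x 2) (by
      intro i
      fin_cases i
      · simp [← hf, mul_assoc]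
      · simp [← hg, mul_assoc]
      · refine ⟨-(x 0 * f + x 1 * g), ?_⟩
        simp only [Fin.reduceFinMk]
        rw [← hf, ← hg] at hx2
        linear_combination hx2)
    have : (LinearMap.proj 2 : (Fin 3 → MvPolynomial (Fin 2) k) →ₗ[k] _) x = L1 t := by
      simp [L1, ht, mul_comm]
    rw [this]
    apply QQ_mem
    intro h0
    refine hom_of_mul_right ?_ hp hp0 h0
    rw [mul_comm, ← ht]; exact hx1 2
  · rintro x ⟨hx1, hx2⟩ (h0 : x 2 = 0)
    rw [Fin.sum_univ_three, h0, ← hf, ← hg] at hx2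
    obtain ⟨t, h1, h2⟩ := relprime_syz (a := x 0) (b := x 1) hrel
      (mul_left_cancel₀ hp0 (by linear_combination hx2))
    have : x = L2 t := by
      ext1 i
      fin_cases i
      · simpa [L2] using h1
      · simpa [L2] using h2
      · simpa [L2] using h0
    rw [this]
    apply QQ_mem
    intro ht
    have hor : g ≠ 0 ∨ f ≠ 0 := by
      by_contra! h
      rw [h.1, h.2] at hrel
      exact not_isUnit_zero (hrel dvd_rfl dvd_rfl)
    rcases hor with h | h
    · exact hom_of_mul_right (h1 ▸ hx1 0) hgh h ht
    · refine hom_of_mul_right (t := t) (p := f) ?_ hfh h ht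
      have := (hx1 1).neg
      rw [h2] at this
      simpa using this

end syz


section restr
variable {k : Type*} [Field k]

noncomputable def lin (t : k) : MvPolynomial (Fin 3) k := X 2 - C t * X 0 - C (t ^ 2) * X 1

noncomputable def resP (t : k) : MvPolynomial (Fin 3) k →ₐ[k] MvPolynomial (Fin 2) k :=
  aeval ![X 0, X 1, C t * X 0 + C (t ^ 2) * X 1]

lemma resP_lin (t : k) : resP t (lin t) = 0 := by
  have h (c : k) : resP t (C c) = C c := (resP t).commutes c
  have h0 : resP t (X 0) = X 0 := by simp [resP]
  have h1 : resP t (X 1) = X 1 := by simp [resP]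
  have h2 : resP t (X 2) = C t * X 0 + C (t ^ 2) * X 1 := by simp [resP]
  rw [lin, map_sub, map_sub, map_mul, map_mul, h, h, h0, h1, h2]; ring

lemma resP_hom (t : k) {f : MvPolynomial (Fin 3) k} {m : ℕ} (h : f.IsHomogeneous m) :
    (resP t f).IsHomogeneous m := by
  have := h.aeval (![X 0, X 1, C t * X 0 + C (t ^ 2) * X 1] : Fin 3 → MvPolynomial (Fin 2) k) 
    (n := 1) (by
      intro i
      fin_cases i
      · exact isHomogeneous_X _ _
      · exact isHomogeneous_X _ _
      · exact (isHomogeneous_C_mul_X _ _).add (isHomogeneous_C_mul_X _ _))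
  simpa [resP] using this

lemma lin_hom (t : k) : (lin t).IsHomogeneous 1 :=
  ((isHomogeneous_X _ _).sub (isHomogeneous_C_mul_X _ _)).sub (isHomogeneous_C_mul_X _ _)

lemma lin_ne (t : k) : lin t ≠ 0 := by
  intro h
  have := congrArg (eval ![0, 0, 1]) h
  simp [lin] at this

lemma lin_dvd (t : k) {f : MvPolynomial (Fin 3) k} (h : resP t f = 0) : lin t ∣ f := by
  let J := Ideal.span {lin t}
  let ι : MvPolynomial (Fin 2) k →ₐ[k] MvPolynomial (Fin 3) k := aeval ![X 0, X 1]
  have key : Ideal.Quotient.mkₐ k J = (Ideal.Quotient.mkₐ k J).comp (ι.comp (resP t)) := by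
    ext i
    have hC (c : k) : ι (C c) = C c := ι.commutes c
    fin_cases i
    · simp [resP, ι]
    · simp [resP, ι]
    · simp only [resP, Fin.reduceFinMk, AlgHom.comp_apply, aeval_X, Matrix.cons_val, map_add, map_mul,
        Ideal.Quotient.mkₐ_eq_mk, hC]
      rw [← map_mul, ← map_mul, ← map_add, Ideal.Quotient.eq, Ideal.mem_span_singleton]
      apply dvd_of_eq
      simp [ι, lin]; ring
  have := DFunLike.congr_fun key f
  simp only [AlgHom.comp_apply, h, map_zero, Ideal.Quotient.mkₐ_eq_mk] at this
  rw [Ideal.Quotient.eq_zero_iff_mem, Ideal.mem_span_singleton] at this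
  exact this

lemma bad_finite (P : Ideal (MvPolynomial (Fin 3) k)) [P.IsPrime]
    (h : ¬ ∀ i, X i ∈ P) : {t : k | lin t ∈ P}.Finite := by
  let A := MvPolynomial (Fin 3) k ⧸ P
  let x : Fin 3 → A := fun i => Ideal.Quotient.mk P (X i)
  let q : Polynomial A := Polynomial.C (x 2) - Polynomial.C (x 0) * Polynomial.X
    - Polynomial.C (x 1) * Polynomial.X ^ 2
  have hq : q ≠ 0 := by
    intro hq
    apply h
    have c0 := congrArg (fun r => Polynomial.coeff r 0) hq
    have c1 := congrArg (fun r => Polynomial.coeff r 1) hq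
    have c2 := congrArg (fun r => Polynomial.coeff r 2) hq
    simp [q, Polynomial.coeff_X, Polynomial.coeff_C, Polynomial.coeff_X_pow] at c0 c1 c2
    intro i
    rw [← Ideal.Quotient.eq_zero_iff_mem]
    fin_cases i
    · exact c1
    · exact c2
    · exact c0
  have hf := (Polynomial.finite_setOfPred_isRoot hq)
  refine (hf.preimage (f := algebraMap k A) (FaithfulSMul.algebraMap_injective k A).injOn).subset ?_
  intro t ht
  simp only [Set.mem_preimage, Set.mem_ofPred_eq, Polynomial.IsRoot.def]
  have : Ideal.Quotient.mk P (lin t) = 0 := Ideal.Quotient.eq_zero_iff_mem.2 ht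
  rw [← this]
  have hC (c : k) : Ideal.Quotient.mk P (C c) = algebraMap k A c := rfl
  simp [q, lin, hC, x]; ring

lemma no_chain {A : Type*} [CommRing A] (I : Ideal A) (hdim : ringKrullDim (A ⧸ I) ≤ 1)
    (P Q M : Ideal A) [hP : P.IsPrime] [hQ : Q.IsPrime] [hM : M.IsPrime] (h0 : I ≤ P) (h1 : P < Q)
    (h2 : Q < M) : False := by
  rw [ringKrullDim_quotient] at hdim
  let p : PrimeSpectrum.zeroLocus (I : Set A) := ⟨⟨P, hP⟩, h0⟩
  let q : PrimeSpectrum.zeroLocus (I : Set A) := ⟨⟨Q, hQ⟩, h0.trans h1.le⟩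
  let m : PrimeSpectrum.zeroLocus (I : Set A) := ⟨⟨M, hM⟩, h0.trans (h1.le.trans h2.le)⟩
  have a1 : p < q := h1
  have a2 : q < m := h2
  let s : LTSeries (PrimeSpectrum.zeroLocus (I : Set A)) :=
    LTSeries.mk 2 ![p, q, m] (by
      refine Fin.strictMono_iff_lt_succ.2 fun i => ?_
      fin_cases i
      · exact a1
      · exact a2)
  have := (Order.LTSeries.length_le_krullDim s).trans hdim
  have hs : s.length = 2 := rfl
  rw [hs] at this
  exact absurd this (by decide)

lemma exists_line [Infinite k] {φ : Fin 3 → MvPolynomial (Fin 3) k} {e : ℕ} (he : 0 < e)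
    (hφ : ∀ i, (φ i).IsHomogeneous e)
    (I : Ideal (MvPolynomial (Fin 3) k)) (hI : I = Ideal.span (Set.range φ))
    (hdim : ringKrullDim (MvPolynomial (Fin 3) k ⧸ I) ≤ 1) :
    ∃ t : k, Cop (fun i => resP t (φ i)) := by
  have hfin := Ideal.finite_minimalPrimes_of_isNoetherianRing _ I
  have hB : (⋃ P ∈ {P ∈ I.minimalPrimes | ¬ ∀ i, X i ∈ P}, {t : k | lin t ∈ P}).Finite := by
    refine Set.Finite.biUnion (hfin.subset (Set.sep_subset _ _)) ?_
    rintro P ⟨hP, hX⟩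
    have := hP.1.1
    exact bad_finite P hX
  obtain ⟨t, ht⟩ := hB.infinite_compl.nonempty
  refine ⟨t, fun p hp => ?_⟩
  by_contra! hall
  obtain ⟨p, hp, hall, hp0⟩ : ∃ p : MvPolynomial (Fin 2) k, Prime p ∧ (∀ i, p ∣ resP t (φ i)) ∧
      constantCoeff p = 0 := by
    by_cases hz : ∀ i, resP t (φ i) = 0
    · exact ⟨X 0, X_prime, fun i => by simp [hz i], by simp⟩
    · push Not at hz
      obtain ⟨i, hi⟩ := hz
      refine ⟨p, hp, hall, ?_⟩
      obtain ⟨c, hc⟩ := hall i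
      have h1 := resP_hom t (hφ i)
      rw [hc] at h1 hi
      obtain ⟨a, b, hab, ha, hb⟩ := hom_of_mul h1 hi
      by_contra hne
      have ha0 : a = 0 := by
        by_contra ha0
        exact hne (ha.coeff_eq_zero (by simpa using Ne.symm ha0))
      subst ha0
      rw [← totalDegree_zero_iff_isHomogeneous, totalDegree_eq_zero_iff_eq_C] at ha
      apply hp.not_isUnit
      rw [ha]
      exact (IsUnit.mk0 _ (by simpa [constantCoeff_eq] using hne)).map C
  have : (Ideal.span {p}).IsPrime := (Ideal.span_singleton_prime hp.ne_zero).2 hp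
  let Q := (Ideal.span {p}).comap (resP t)
  let M := (RingHom.ker (constantCoeff (σ := Fin 2) (R := k))).comap (resP t)
  have hQp : Q.IsPrime := Ideal.comap_isPrime _ _
  have : (RingHom.ker (constantCoeff (σ := Fin 2) (R := k))).IsPrime := RingHom.ker_isPrime _
  have hMp : M.IsPrime := Ideal.comap_isPrime _ _
  have hIQ : I ≤ Q := by
    rw [hI, Ideal.span_le]
    rintro _ ⟨i, rfl⟩
    exact Ideal.mem_span_singleton.2 (hall i)
  have hQX : ¬ (X 0 ∈ Q ∧ X 1 ∈ Q) := by
    rintro ⟨h0, h1⟩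
    have h0' : p ∣ X 0 := by
      have := Ideal.mem_span_singleton.1 h0
      simpa [resP] using this
    have h1' : p ∣ X 1 := by
      have := Ideal.mem_span_singleton.1 h1
      simpa [resP] using this
    have as := hp.irreducible.associated_of_dvd (X_prime (R := k) (i := (0 : Fin 2))).irreducible h0'
    have := as.symm.dvd.trans h1'
    rw [X_dvd_X] at this
    simp at this
  have hQM : Q < M := by
    refine lt_of_le_of_ne ?_ ?_
    · intro x hx
      obtain ⟨y, hy⟩ := Ideal.mem_span_singleton.1 hx
      change constantCoeff (resP t x) = 0
      have hy' : resP t x = p * y := hy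
      rw [hy', map_mul, hp0, zero_mul]
    · intro h
      apply hQX
      rw [h]
      constructor
      · change constantCoeff (resP t (X 0)) = 0
        simp [resP]
      · change constantCoeff (resP t (X 1)) = 0
        simp [resP]
  obtain ⟨P, hP, hPQ⟩ := Ideal.exists_minimalPrimes_le hIQ
  have := hP.1.1
  have hEq : P = Q := by
    by_contra hne
    exact no_chain I hdim P Q M hP.1.2 (lt_of_le_of_ne hPQ hne) hQM
  apply ht
  simp only [Set.mem_iUnion]
  refine ⟨P, ⟨hP, ?_⟩, ?_⟩
  · intro h
    apply hQX
    rw [← hEq]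
    exact ⟨h 0, h 1⟩
  · rw [hEq]
    change resP t (lin t) ∈ Ideal.span {p}
    rw [resP_lin]; simp

lemma Cop_of_line {φ : Fin 3 → MvPolynomial (Fin 3) k} {e : ℕ} (he : 0 < e)
    (hφ : ∀ i, (φ i).IsHomogeneous e) {t : k} (h : Cop (fun i => resP t (φ i))) : Cop φ := by
  intro p hp
  by_contra! hall
  have hne := h.ne_zero (fun i => resP_hom t (hφ i)) he
  obtain ⟨i, hi⟩ : ∃ i, resP t (φ i) ≠ 0 := by
    rcases hne with h | h
    · exact ⟨0, h⟩
    · exact ⟨1, h⟩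
  have hi' : φ i ≠ 0 := fun h0 => hi (by rw [h0, map_zero])
  obtain ⟨c, hc⟩ := hall i
  have h1 := hφ i
  rw [hc] at h1 hi hi'
  obtain ⟨a, b, hab, ha, hb⟩ := hom_of_mul h1 hi'
  have hu : ¬ IsUnit (resP t p) := by
    intro hu
    have h0 := unit_hom hu (resP_hom t ha)
    subst h0
    rw [← totalDegree_zero_iff_isHomogeneous, totalDegree_eq_zero_iff_eq_C] at ha
    apply hp.not_isUnit
    have := hp.ne_zero
    rw [ha] at this ⊢
    exact (IsUnit.mk0 _ (by simpa using this)).map C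
  have hn0 : resP t p ≠ 0 := by
    intro h0; apply hi; rw [map_mul, h0, zero_mul]
  obtain ⟨q, hq, hd⟩ := WfDvdMonoid.exists_irreducible_factor hu hn0
  obtain ⟨j, hj⟩ := h q hq.prime
  exact hj (hd.trans (map_dvd _ (hall j)))

lemma syz_step {φ : Fin 3 → MvPolynomial (Fin 3) k} (t : k) (m : ℕ) :
    Module.finrank k (Syz φ (m + 1)) ≤
      Module.finrank k (Syz (fun i => resP t (φ i)) (m + 1)) + Module.finrank k (Syz φ m) := by
  let L : (Fin 3 → MvPolynomial (Fin 3) k) →ₗ[k] (Fin 3 → MvPolynomial (Fin 3) k) :=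
    LinearMap.pi fun i => LinearMap.mulRight k (lin t) ∘ₗ LinearMap.proj i
  have h := la_le ((resP t).toLinearMap.compLeft (Fin 3)) (Syz φ (m + 1))
    (Syz (fun i => resP t (φ i)) (m + 1)) ((Syz φ m).map L) ?_ ?_
  · exact h.trans (Nat.add_le_add_left (Submodule.finrank_map_le L _) _)
  · rintro x ⟨h1, h2⟩
    refine ⟨fun i => resP_hom t (h1 i), ?_⟩
    have := congrArg (resP t) h2
    simpa [map_sum] using this
  · rintro x ⟨h1, h2⟩ h3
    have h4 : ∀ i, lin t ∣ x i := fun i => lin_dvd t (congrFun h3 i)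
    choose y hy using h4
    refine ⟨y, ⟨?_, ?_⟩, ?_⟩
    · intro i
      by_cases h0 : y i = 0
      · rw [h0]; exact isHomogeneous_zero _ _ _
      · have := h1 i
        rw [hy i, mul_comm] at this
        exact (hom_of_mul_right this (lin_hom t) (lin_ne t) h0).2
    · apply mul_left_cancel₀ (lin_ne t)
      rw [mul_zero, ← h2, Finset.mul_sum]
      simp_rw [hy, mul_assoc]
    · ext1 i
      simp [L, hy i, mul_comm]

lemma syz_tel {φ : Fin 3 → MvPolynomial (Fin 3) k} {e : ℕ} (he : 2 ≤ e)
    (hφ : ∀ i, (φ i).IsHomogeneous e) {t : k} (h : Cop (fun i => resP t (φ i))) (s : ℕ) :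
    Module.finrank k (Syz φ (e - 2 + s)) ≤
      Module.finrank k (Syz φ (e - 2)) + s * (e - 2) + s * (s + 1) := by
  induction s with
  | zero => simp
  | succ s ih =>
    have h1 := syz_step (φ := φ) t (e - 2 + s)
    have h2 := syz2_bound (j := e - 2 + s + 1) h (fun i => resP_hom t (hφ i)) (by omega) (by omega)
    rw [← add_assoc]
    obtain ⟨f, rfl⟩ := Nat.exists_eq_add_of_le he
    simp only [Nat.add_sub_cancel_left] at *
    nlinarith

end restr


section dims
variable {k : Type*} [Field k]

lemma par_cross {A : Type*} [CommRing A] {φ u v : Fin 3 → A} (h1 : ∑ i, u i * φ i = 0)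
    (h2 : ∑ i, v i * φ i = 0) (i j : Fin 3) :
    φ j * (crossProduct u v) i = φ i * (crossProduct u v) j := by
  rw [Fin.sum_univ_three] at h1 h2
  rw [cross_apply]
  fin_cases i <;> fin_cases j <;> simp only [Fin.zero_eta, Fin.mk_one, Fin.reduceFinMk,
    Matrix.cons_val]
  · linear_combination v 2 * h1 - u 2 * h2
  · linear_combination -(v 1 * h1 - u 1 * h2)
  · linear_combination -(v 2 * h1 - u 2 * h2)
  · linear_combination v 0 * h1 - u 0 * h2
  · linear_combination v 1 * h1 - u 1 * h2
  · linear_combination -(v 0 * h1 - u 0 * h2)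

lemma cross_zero_par {A : Type*} [CommRing A] {u v : Fin 3 → A} (h : crossProduct u v = 0)
    (i j : Fin 3) : u j * v i = u i * v j := by
  rw [cross_apply] at h
  have h0 := congrFun h 0
  have h1 := congrFun h 1
  have h2 := congrFun h 2
  simp only [Matrix.cons_val, Pi.zero_apply] at h0 h1 h2
  fin_cases i <;> fin_cases j <;> simp only [Fin.zero_eta, Fin.mk_one, Fin.reduceFinMk]
  · linear_combination -h2
  · linear_combination h1
  · linear_combination h2
  · linear_combination -h0
  · linear_combination -h1
  · linear_combination h0

lemma cross_hom {u v : Fin 3 → MvPolynomial (Fin 3) k} {a b : ℕ} (hu : ∀ i, (u i).IsHomogeneous a)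
    (hv : ∀ i, (v i).IsHomogeneous b) (i : Fin 3) : (crossProduct u v i).IsHomogeneous (a + b) := by
  rw [cross_apply]
  fin_cases i
  · exact ((hu 1).mul (hv 2)).sub ((hu 2).mul (hv 1))
  · exact ((hu 2).mul (hv 0)).sub ((hu 0).mul (hv 2))
  · exact ((hu 0).mul (hv 1)).sub ((hu 1).mul (hv 0))

noncomputable def vecL (u : Fin 3 → MvPolynomial (Fin 3) k) :
    MvPolynomial (Fin 3) k →ₗ[k] (Fin 3 → MvPolynomial (Fin 3) k) :=
  LinearMap.pi fun i => LinearMap.mulRight k (u i)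

lemma QQ_finrank3 {W : Type*} [AddCommGroup W] [Module k W] (L : MvPolynomial (Fin 3) k →ₗ[k] W)
    {δ j : ℕ} (h : δ ≤ j) : 2 * Module.finrank k (QQ L δ j) ≤ (j - δ + 1) * (j - δ + 2) := by
  rw [QQ, if_pos h, ← finrank3 (k := k)]
  exact Nat.mul_le_mul_left _ (Submodule.finrank_map_le L (homogeneousSubmodule (Fin 3) k (j - δ)))

lemma syz_upper {φ u : Fin 3 → MvPolynomial (Fin 3) k} {e r m : ℕ}
    (hφ : ∀ i, (φ i).IsHomogeneous e) (hc : Cop φ) (h0 : φ ≠ 0) (hu : u ∈ Syz φ r)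
    (hcu : Cop u) (hu0 : u ≠ 0) (h1 : r ≤ m) (h2 : e ≤ m + r) :
    2 * Module.finrank k (Syz φ m) ≤
      (m + r - e + 1) * (m + r - e + 2) + (m - r + 1) * (m - r + 2) := by
  obtain ⟨i, hi⟩ := Function.ne_iff.1 h0
  obtain ⟨j, hj⟩ := Function.ne_iff.1 hu0
  have key := la_le (LinearMap.proj i ∘ₗ (crossProduct u).restrictScalars k) (Syz φ m)
    (QQ (LinearMap.mulRight k (φ i)) e (m + r)) (QQ (vecL u) r m) ?_ ?_
  · have a1 := QQ_finrank3 (LinearMap.mulRight k (φ i)) h2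
    have a2 := QQ_finrank3 (vecL u) h1
    omega
  · rintro v ⟨hv1, hv2⟩
    obtain ⟨t, ht⟩ := hc.par h0 (par_cross hu.2 hv2)
    have : (LinearMap.proj i ∘ₗ (crossProduct u).restrictScalars k) v
        = LinearMap.mulRight k (φ i) t := by
      simpa using ht i
    rw [this]
    apply QQ_mem
    intro ht0
    refine hom_of_mul_right ?_ (hφ i) hi ht0
    rw [← ht i, add_comm]
    exact cross_hom hu.1 hv1 i
  · rintro v ⟨hv1, hv2⟩ h3
    have h3' : crossProduct u v i = 0 := h3
    have h4 : crossProduct u v = 0 := by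
      ext1 j
      have := par_cross hu.2 hv2 i j
      rw [h3', mul_zero] at this
      exact (mul_eq_zero.1 this.symm).resolve_left hi
    obtain ⟨t, ht⟩ := hcu.par hu0 (cross_zero_par h4)
    have : v = vecL u t := by
      ext1 l; simp [vecL, ht]
    rw [this]
    apply QQ_mem
    intro ht0
    refine hom_of_mul_right ?_ (hu.1 j) hj ht0
    rw [← ht j]; exact hv1 j

lemma comb_cross {A : Type*} [CommRing A] {u v : Fin 3 → A} {a b : A}
    (h : ∀ i, a * u i + b * v i = 0) (i : Fin 3) :
    a * crossProduct u v i = 0 ∧ b * crossProduct u v i = 0 := by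
  have h0 := h 0
  have h1 := h 1
  have h2 := h 2
  rw [cross_apply]
  fin_cases i <;> simp only [Fin.zero_eta, Fin.mk_one, Fin.reduceFinMk, Matrix.cons_val]
  · exact ⟨by linear_combination v 2 * h1 - v 1 * h2, by linear_combination u 1 * h2 - u 2 * h1⟩
  · exact ⟨by linear_combination v 0 * h2 - v 2 * h0, by linear_combination u 2 * h0 - u 0 * h2⟩
  · exact ⟨by linear_combination v 1 * h0 - v 0 * h1, by linear_combination u 0 * h1 - u 1 * h0⟩

lemma syz_lower {φ u v : Fin 3 → MvPolynomial (Fin 3) k} {r s m : ℕ}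
    (h0 : φ ≠ 0) (hu : ∀ i, (u i).IsHomogeneous r) (hv : ∀ i, (v i).IsHomogeneous s)
    (h : φ = crossProduct u v) (h1 : r ≤ m) (h2 : s ≤ m) :
    (m - s + 1) * (m - s + 2) + (m - r + 1) * (m - r + 2) ≤ 2 * Module.finrank k (Syz φ m) := by
  obtain ⟨i, hi⟩ := Function.ne_iff.1 h0
  have key := la_inj (V := homogeneousSubmodule (Fin 3) k (m - r) ×
      homogeneousSubmodule (Fin 3) k (m - s))
    (LinearMap.coprod (vecL u ∘ₗ Submodule.subtype _) (vecL v ∘ₗ Submodule.subtype _))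
    (Syz φ m) ?_ ?_
  · rw [Module.finrank_prod] at key
    have a1 := finrank3 (k := k) (m - r)
    have a2 := finrank3 (k := k) (m - s)
    omega
  · rintro ⟨⟨a, ha⟩, ⟨b, hb⟩⟩
    refine ⟨?_, ?_⟩
    · intro l
      have a1 : (a * u l).IsHomogeneous m := by
        have := IsHomogeneous.mul ha (hu l)
        rwa [Nat.sub_add_cancel h1] at this
      have a2 : (b * v l).IsHomogeneous m := by
        have := IsHomogeneous.mul hb (hv l)
        rwa [Nat.sub_add_cancel h2] at this
      exact a1.add a2
    · rw [h, Fin.sum_univ_three, cross_apply]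
      simp [vecL]
      ring
  · rintro ⟨⟨a, ha⟩, ⟨b, hb⟩⟩ hz
    have hz' : ∀ l, a * u l + b * v l = 0 := fun l => congrFun hz l
    obtain ⟨e1, e2⟩ := comb_cross hz' i
    rw [← h] at e1 e2
    have ea : a = 0 := (mul_eq_zero.1 e1).resolve_right hi
    have eb : b = 0 := (mul_eq_zero.1 e2).resolve_right hi
    subst ea; subst eb
    rfl

/-- the numerical hypothesis `c₂ = e` in terms of syzygies -/
def NumHyp (φ : Fin 3 → MvPolynomial (Fin 3) k) (e : ℕ) : Prop :=
  ∀ᶠ m : ℕ in atTop, 2 * (Module.finrank k (Syz φ m) : ℤ)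
    = (m + 1) * (m + 2) + (m - e + 1) * (m - e + 2) - 2 * e

lemma numHyp_iff {φ : Fin 3 → MvPolynomial (Fin 3) k} {e : ℕ}
    (hφ : ∀ i, (φ i).IsHomogeneous e)
    (I : Ideal (MvPolynomial (Fin 3) k)) (hI : I = Ideal.span (Set.range φ)) :
    (∀ᶠ m in atTop, (Module.finrank k ((homogeneousSubmodule (Fin 3) k m).map
              (Ideal.Quotient.mkₐ k I).toLinearMap) : ℤ) = (e : ℤ) ^ 2 - e) ↔ NumHyp φ e := by
  have key (m : ℕ) : (Module.finrank k ((homogeneousSubmodule (Fin 3) k (m + e)).map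
              (Ideal.Quotient.mkₐ k I).toLinearMap) : ℤ) = (e : ℤ) ^ 2 - e ↔
      2 * (Module.finrank k (Syz φ m) : ℤ)
    = (m + 1) * (m + 2) + (m - e + 1) * (m - e + 2) - 2 * e := by
    have h := dim_formula m hφ I hI
    have h1 := finrank3 (k := k) m
    have h2 := finrank3 (k := k) (m + e)
    zify at h h1 h2
    constructor
    · intro h3
      rw [h3] at h
      linear_combination -2 * h - h2 + 3 * h1
    · intro h3
      refine mul_left_cancel₀ (two_ne_zero) ?_
      linear_combination 2 * h + h2 - 3 * h1 + h3
  unfold NumHyp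
  constructor
  · intro h
    have := (tendsto_add_atTop_nat e).eventually h
    filter_upwards [this] with m hm
    exact (key m).1 hm
  · intro h
    rw [eventually_atTop] at h ⊢
    obtain ⟨a, ha⟩ := h
    refine ⟨a + e, fun b hb => ?_⟩
    obtain ⟨c, rfl⟩ := Nat.exists_eq_add_of_le hb
    rw [show a + e + c = (a + c) + e by ring]
    exact (key _).2 (ha _ (by omega))

lemma cross_comp {φ u v : Fin 3 → MvPolynomial (Fin 3) k} {r s : ℕ}
    (hφ : ∀ i, (φ i).IsHomogeneous (s + r)) (hu : ∀ i, (u i).IsHomogeneous r)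
    (h : φ = crossProduct u v) :
    φ = crossProduct u (fun i => homogeneousComponent s (v i)) := by
  have key (i j : Fin 3) : homogeneousComponent (s + r) (u i * v j)
      = u i * homogeneousComponent s (v j) := by
    rw [mul_comm, comp_mul s (hu i), mul_comm]
  ext1 i
  rw [← homogeneousComponent_eq_self (hφ i), h, cross_apply, cross_apply]
  fin_cases i <;> simp [key]

lemma free_contra {φ u v : Fin 3 → MvPolynomial (Fin 3) k} {e r : ℕ} (he : 5 ≤ e) (hr : r ≤ 1)
    (hφ : ∀ i, (φ i).IsHomogeneous e) (h0 : φ ≠ 0) (hN : NumHyp φ e)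
    (hu : ∀ i, (u i).IsHomogeneous r) (h : φ = crossProduct u v) : False := by
  have h' := cross_comp (s := e - r) (r := r) (by rwa [Nat.sub_add_cancel (by omega)]) hu h
  obtain ⟨a, ha⟩ := eventually_atTop.1 hN
  have h1 := ha (a + e) (by omega)
  have h2 := syz_lower (m := a + e) h0 hu
    (fun i => homogeneousComponent_isHomogeneous (e - r) (v i)) h' (by omega) (by omega)
  rw [show a + e - (e - r) = a + r by omega] at h2
  zify [show r ≤ a + e by omega] at h2
  push_cast at h1
  have hr' : r = 0 ∨ r = 1 := by omega
  rcases hr' with rfl | rfl <;> push_cast at h2 <;> nlinarith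

lemma exists_min {φ : Fin 3 → MvPolynomial (Fin 3) k} {n : ℕ} (h : Syz φ n ≠ ⊥) :
    ∃ r u, r ≤ n ∧ u ∈ Syz φ r ∧ u ≠ 0 ∧ Cop u := by
  classical
  have hex : ∃ n, Syz φ n ≠ ⊥ := ⟨n, h⟩
  obtain ⟨u, hu, hu0⟩ := Submodule.exists_mem_ne_zero_of_ne_bot (Nat.find_spec hex)
  refine ⟨Nat.find hex, u, Nat.find_min' hex h, hu, hu0, ?_⟩
  intro p hp
  by_contra! hall
  choose y hy using hall
  obtain ⟨i, hi⟩ := Function.ne_iff.1 hu0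
  have h1 := hu.1 i
  have hi' : u i ≠ 0 := hi
  rw [hy i] at h1 hi'
  obtain ⟨a, b, hab, ha, hb⟩ := hom_of_mul h1 hi'
  have ha0 : a ≠ 0 := by
    rintro rfl
    rw [← totalDegree_zero_iff_isHomogeneous, totalDegree_eq_zero_iff_eq_C] at ha
    apply hp.not_isUnit
    have := hp.ne_zero
    rw [ha] at this ⊢
    exact (IsUnit.mk0 _ (by simpa using this)).map C
  refine Nat.find_min hex (m := Nat.find hex - a) (by omega) ?_
  intro hbot
  have hmem : y ∈ Syz φ (Nat.find hex - a) := by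
    refine ⟨fun j => ?_, ?_⟩
    · by_cases hj : y j = 0
      · rw [hj]; exact isHomogeneous_zero _ _ _
      · have := hu.1 j
        rw [hy j, mul_comm] at this
        exact (hom_of_mul_right this ha hp.ne_zero hj).2
    · apply mul_left_cancel₀ hp.ne_zero
      rw [mul_zero, ← hu.2, Finset.mul_sum]
      simp_rw [hy, mul_assoc]
  rw [hbot, Submodule.mem_bot] at hmem
  exact hi' (by rw [hmem]; simp)

lemma exists_deg_one {φ : Fin 3 → MvPolynomial (Fin 3) k} {e : ℕ} (he : 5 ≤ e)
    (hφ : ∀ i, (φ i).IsHomogeneous e) (hN : NumHyp φ e) {t : k}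
    (ht : Cop (fun i => resP t (φ i))) :
    ∃ u ∈ Syz φ 1, u ≠ 0 ∧ Cop u ∧ ∀ v, φ ≠ crossProduct u v := by
  have hc := Cop_of_line (by omega) hφ ht
  have h0 : φ ≠ 0 := by
    rcases hc.ne_zero hφ (by omega) with h | h
    · rintro rfl; exact h rfl
    · rintro rfl; exact h rfl
  obtain ⟨a, ha⟩ := eventually_atTop.1 hN
  have hne : Syz φ (e - 2) ≠ ⊥ := by
    intro hbot
    have h1 := syz_tel (by omega) hφ ht (a + 2)
    have h2 := ha (e - 2 + (a + 2)) (by omega)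
    rw [hbot, finrank_bot] at h1
    rw [show e - 2 + (a + 2) = e + a by omega] at h1 h2
    zify [show 2 ≤ e by omega] at h1
    push_cast at h2
    nlinarith
  obtain ⟨r, u, hr, hu, hu0, hcu⟩ := exists_min hne
  have hr1 : r ≤ 1 := by
    by_contra hr1
    have h1 := syz_upper (m := a + e) hφ hc h0 hu hcu hu0 (by omega) (by omega)
    have h2 := ha (a + e) (by omega)
    rw [show a + e + r - e = a + r by omega] at h1
    zify [show r ≤ a + e by omega] at h1
    push_cast at h2
    have h3 : (2 : ℤ) ≤ r := by omega
    have h4 : (r : ℤ) + 2 ≤ e := by omega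
    have h5 : (5 : ℤ) ≤ e := by omega
    nlinarith [mul_nonneg (sub_nonneg.2 h3) (sub_nonneg.2 h4)]
  have hnf : ∀ v, φ ≠ crossProduct u v := fun v hv => free_contra he hr1 hφ h0 hN hu.1 hv
  have hr' : r = 0 ∨ r = 1 := by omega
  rcases hr' with rfl | rfl
  · exfalso
    have hC : ∀ i, u i = C (coeff 0 (u i)) := by
      intro i
      have := hu.1 i
      rwa [← totalDegree_zero_iff_isHomogeneous, totalDegree_eq_zero_iff_eq_C] at this
    obtain ⟨i, hi⟩ := Function.ne_iff.1 hu0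
    have hci : coeff 0 (u i) ≠ 0 := by
      intro h; apply hi; rw [hC i, h]; simp
    let W : Fin 3 → MvPolynomial (Fin 3) k := Pi.single i (C (coeff 0 (u i))⁻¹)
    have hW : ∑ j, u j * W j = 1 := by
      rw [Finset.sum_eq_single i]
      · simp only [W, Pi.single_eq_same]
        nth_rewrite 1 [hC i]
        rw [← C_mul, mul_inv_cancel₀ hci, C_1]
      · intro j _ hj; simp [W, hj]
      · simp
    apply hnf (crossProduct φ W)
    have h2 := hu.2
    rw [Fin.sum_univ_three] at hW h2
    ext1 j
    rw [cross_apply, cross_apply]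
    fin_cases j <;> simp only [Fin.zero_eta, Fin.mk_one, Fin.reduceFinMk, Matrix.cons_val]
    · linear_combination -φ 0 * hW + W 0 * h2
    · linear_combination -φ 1 * hW + W 1 * h2
    · linear_combination -φ 2 * hW + W 2 * h2
  · exact ⟨u, hu, hu0, hcu, hnf⟩

end dims


section lincoord
variable {k : Type*} [Field k]

/-- substitution by a matrix of coefficients -/
noncomputable def psiA (A : Matrix (Fin 3) (Fin 3) k) :
    MvPolynomial (Fin 3) k →ₐ[k] MvPolynomial (Fin 3) k :=
  aeval (fun i => ∑ j, C (A i j) * X j)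

lemma psiA_X (A : Matrix (Fin 3) (Fin 3) k) (i : Fin 3) :
    psiA A (X i) = ∑ j, C (A i j) * X j := by simp [psiA]

lemma psiA_comp (A B : Matrix (Fin 3) (Fin 3) k) (h : A * B = 1) (f : MvPolynomial (Fin 3) k) :
    psiA B (psiA A f) = f := by
  have : (psiA B).comp (psiA A) = AlgHom.id k _ := by
    apply MvPolynomial.algHom_ext
    intro i
    simp only [AlgHom.comp_apply, psiA_X, map_sum, map_mul, AlgHom.id_apply]
    have hC (c : k) : psiA B (C c) = C c := by simp [psiA]
    simp only [hC]
    have e (l : Fin 3) : ∑ j, A i j * B j l = (1 : Matrix (Fin 3) (Fin 3) k) i l := by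
      rw [← h, Matrix.mul_apply]
    simp only [Finset.mul_sum, ← mul_assoc, ← C_mul]
    rw [Finset.sum_comm]
    simp only [← Finset.sum_mul, ← map_sum, e]
    simp [Matrix.one_apply]
  exact DFunLike.congr_fun this f

lemma hom_one {f : MvPolynomial (Fin 3) k} (hf : f.IsHomogeneous 1) :
    ∃ a : Fin 3 → k, f = ∑ j, C (a j) * X j := by
  rw [← mem_homogeneousSubmodule, homogeneousSubmodule_one_eq_span_X,
    Submodule.mem_span_range_iff_exists_fun] at hf
  obtain ⟨a, ha⟩ := hf
  exact ⟨a, by rw [← ha]; simp [smul_eq_C_mul]⟩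

lemma X01_prime {f g : MvPolynomial (Fin 3) k} (h : ∃ a b, f * g = a * X 0 + b * X 1) :
    (∃ a b, f = a * X 0 + b * X 1) ∨ ∃ a b, g = a * X 0 + b * X 1 := by
  set π : MvPolynomial (Fin 3) k →ₐ[k] MvPolynomial (Fin 3) k := aeval ![0, 0, X 2] with hπ
  have key (f : MvPolynomial (Fin 3) k) (hf : π f = 0) : ∃ a b, f = a * X 0 + b * X 1 := by
    have : ∀ f, f - π f ∈ Ideal.span {(X 0 : MvPolynomial (Fin 3) k), X 1} := by
      intro f
      rw [← Ideal.Quotient.mk_eq_mk_iff_sub_mem]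
      have : (Ideal.Quotient.mkₐ k (Ideal.span {(X 0 : MvPolynomial (Fin 3) k), X 1})) =
        (Ideal.Quotient.mkₐ k (Ideal.span {(X 0 : MvPolynomial (Fin 3) k), X 1})).comp π := by
        apply MvPolynomial.algHom_ext
        intro i
        fin_cases i
        · simp only [hπ, AlgHom.comp_apply, aeval_X]
          simp [Ideal.Quotient.eq_zero_iff_mem]
          exact Ideal.subset_span (by simp)
        · simp only [hπ, AlgHom.comp_apply, aeval_X]
          simp [Ideal.Quotient.eq_zero_iff_mem]
          exact Ideal.subset_span (by simp)
        · simp [hπ]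
      exact DFunLike.congr_fun this f
    have := this f
    rw [hf, sub_zero, Ideal.mem_span_pair] at this
    obtain ⟨a, b, h⟩ := this
    exact ⟨a, b, h.symm⟩
  obtain ⟨a, b, h⟩ := h
  have : π f * π g = 0 := by
    rw [← map_mul, h]; simp [hπ]
  rcases mul_eq_zero.1 this with h | h
  · exact Or.inl (key _ h)
  · exact Or.inr (key _ h)

lemma X2_notin : ¬ ∃ a b, (X 2 : MvPolynomial (Fin 3) k) = a * X 0 + b * X 1 := by
  rintro ⟨a, b, h⟩
  have := congrArg (aeval (![0, 0, 1] : Fin 3 → k)) h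
  simp at this

lemma X01_relprime : IsRelPrime (X 0 : MvPolynomial (Fin 3) k) (X 1) := by
  rw [Irreducible.isRelPrime_iff_not_dvd (X_prime.irreducible), X_dvd_X]
  simp

lemma koszul_X {ψ : Fin 3 → MvPolynomial (Fin 3) k} (h : ∑ i, X i * ψ i = 0) :
    ∃ w, ψ = crossProduct (fun i => X i) w := by
  rw [Fin.sum_univ_three] at h
  obtain ⟨a, b, h2⟩ : ∃ a b, ψ 2 = a * X 0 + b * X 1 := by
    refine (X01_prime (f := X 2) (g := ψ 2) ⟨-ψ 0, -ψ 1, ?_⟩).resolve_left X2_notin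
    linear_combination h
  have e : (ψ 0 + a * X 2) * X 0 + (ψ 1 + b * X 2) * X 1 = 0 := by
    rw [h2] at h
    linear_combination h
  obtain ⟨t, h0, h1⟩ := relprime_syz X01_relprime e
  refine ⟨![-b, a, t], ?_⟩
  rw [cross_apply]
  ext1 i
  fin_cases i
  · simp; linear_combination h0
  · simp; linear_combination h1
  · simp; linear_combination h2

lemma indep_case {φ u : Fin 3 → MvPolynomial (Fin 3) k} (A : Matrix (Fin 3) (Fin 3) k)
    (hA : A.det ≠ 0) (hu : ∀ i, u i = ∑ j, C (A i j) * X j) (h : ∑ i, u i * φ i = 0) :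
    ∃ v, φ = crossProduct u v := by
  have hA' : IsUnit A.det := hA.isUnit
  have hu' (i) : u i = psiA A (X i) := by rw [hu, psiA_X]
  have e1 := Matrix.mul_nonsing_inv A hA'
  have e2 := Matrix.nonsing_inv_mul A hA'
  obtain ⟨w, hw⟩ := koszul_X (ψ := fun i => psiA A⁻¹ (φ i)) (by
    have := congrArg (psiA A⁻¹) h
    simpa only [map_sum, map_mul, hu', psiA_comp A A⁻¹ e1, map_zero] using this)
  refine ⟨fun i => psiA A (w i), ?_⟩
  have hφ (i) : φ i = psiA A (psiA A⁻¹ (φ i)) := (psiA_comp _ _ e2 _).symm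
  ext1 i
  rw [hφ, show psiA A⁻¹ (φ i) = _ from congrFun hw i]
  simp only [cross_apply, hu']
  fin_cases i <;> simp

lemma lin_prime {p q f g : MvPolynomial (Fin 3) k} (hp : p.IsHomogeneous 1) (hq : q.IsHomogeneous 1)
    (hpq : IsRelPrime p q) (h : ∃ a b, f * g = a * p + b * q) :
    (∃ a b, f = a * p + b * q) ∨ ∃ a b, g = a * p + b * q := by
  obtain ⟨a, ha⟩ := hom_one hp
  obtain ⟨b, hb⟩ := hom_one hq
  obtain ⟨c, hc⟩ : ∃ c : Fin 3 → k, (Matrix.of ![a, b, c]).det ≠ 0 := by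
    by_contra! hcon
    have e0 := hcon ![1, 0, 0]
    have e1 := hcon ![0, 1, 0]
    have e2 := hcon ![0, 0, 1]
    simp [Matrix.det_fin_three] at e0 e1 e2
    have nu (i) (hi : a i ≠ 0) : False := by
      have : p ∣ q := by
        refine ⟨C (b i / a i), ?_⟩
        have hj (j) : b j = a j * (b i / a i) := by
          field_simp
          fin_cases i <;> fin_cases j <;> simp <;> first | ring1 | linear_combination e0 | linear_combination -e0 | linear_combination e1 | linear_combination -e1 | linear_combination e2 | linear_combination -e2
        rw [ha, hb, Finset.sum_mul]
        refine Finset.sum_congr rfl fun j _ => ?_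
        rw [hj j, C_mul]
        ring
      have := unit_hom (hpq dvd_rfl this) hp
      omega
    have hp0 : p = 0 := by
      rw [ha]
      refine Finset.sum_eq_zero fun i _ => ?_
      by_cases hi : a i = 0
      · simp [hi]
      · exact (nu i hi).elim
    have := unit_hom (hpq (hp0 ▸ dvd_zero _) dvd_rfl) hq
    omega
  set A := Matrix.of ![a, b, c] with hAdef
  have hA' : IsUnit A.det := hc.isUnit
  have e1 := Matrix.mul_nonsing_inv A hA'
  have e2 := Matrix.nonsing_inv_mul A hA'
  have hp' : p = psiA A (X 0) := by rw [psiA_X, ha]; simp [hAdef]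
  have hq' : q = psiA A (X 1) := by rw [psiA_X, hb]; simp [hAdef]
  have back (f) (hf : ∃ a b, psiA A⁻¹ f = a * X 0 + b * X 1) : ∃ a b, f = a * p + b * q := by
    obtain ⟨x, y, hf⟩ := hf
    refine ⟨psiA A x, psiA A y, ?_⟩
    rw [← psiA_comp _ _ e2 f, hf, hp', hq']
    simp
  obtain ⟨x, y, h⟩ := h
  have := X01_prime (f := psiA A⁻¹ f) (g := psiA A⁻¹ g) ⟨psiA A⁻¹ x, psiA A⁻¹ y, by
    rw [← map_mul, h, hp', hq', map_add, map_mul, map_mul, psiA_comp _ _ e1, psiA_comp _ _ e1]⟩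
  exact this.imp (back f) (back g)
end lincoord


section good
variable {k : Type*} [Field k]

/-- the nearly free condition -/
def Good (φ : Fin 3 → MvPolynomial (Fin 3) k) (e : ℕ) : Prop :=
  ∃ u v₁ v₂ : Fin 3 → MvPolynomial (Fin 3) k,
        (∑ i, u i * φ i = 0) ∧ (∑ i, v₁ i * φ i = 0) ∧ (∑ i, v₂ i * φ i = 0) ∧
        (∀ i, (u i).IsHomogeneous 1) ∧
        (∀ i, (v₁ i).IsHomogeneous e) ∧ (∀ i, (v₂ i).IsHomogeneous e) ∧
        (∀ w : Fin 3 → MvPolynomial (Fin 3) k,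
          (∑ i, w i * φ i = 0) ↔
            w ∈ Submodule.span (MvPolynomial (Fin 3) k) {u, v₁, v₂}) ∧
        ∃ r : Fin 3 → MvPolynomial (Fin 3) k,
          r ≠ 0 ∧
          (r 0).IsHomogeneous e ∧
          (r 1).IsHomogeneous 1 ∧ (r 2).IsHomogeneous 1 ∧
          (∀ a : Fin 3 → MvPolynomial (Fin 3) k,
            (a 0 • u + a 1 • v₁ + a 2 • v₂ = 0) ↔
              a ∈ Submodule.span (MvPolynomial (Fin 3) k) {r})

lemma lemmaB {φ u : Fin 3 → MvPolynomial (Fin 3) k} {e : ℕ} (he : 0 < e)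
    (hφ : ∀ i, (φ i).IsHomogeneous e) (hc : Cop φ) (hu : ∀ i, (u i).IsHomogeneous 1)
    (hu2 : u 2 = 0) (hcu : Cop u) (h : ∑ i, u i * φ i = 0)
    (hnf : ∀ v, φ ≠ crossProduct u v) : Good φ e := by
  have hne := hcu.ne_zero hu one_pos
  have hrel : IsRelPrime (u 0) (u 1) := by
    intro d h0 h1
    by_contra hd
    have hd0 : d ≠ 0 := by
      rintro rfl
      rw [zero_dvd_iff] at h0 h1
      rcases hne with h | h <;> contradiction
    obtain ⟨p, hp, hpd⟩ := WfDvdMonoid.exists_irreducible_factor hd hd0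
    obtain ⟨i, hi⟩ := hcu p hp.prime
    apply hi
    fin_cases i
    · exact hpd.trans h0
    · exact hpd.trans h1
    · simp [hu2]
  rw [Fin.sum_univ_three, hu2] at h
  obtain ⟨s, h0, h1⟩ := relprime_syz (a := φ 0) (b := φ 1) hrel (by linear_combination h)
  have hs : s ≠ 0 := by
    rintro rfl
    rcases hc.ne_zero hφ he with h | h
    · simp [h0] at h
    · simp [h1] at h
  have hu0 : u 0 ≠ 0 := by
    intro hz
    have := unit_hom (hrel (hz ▸ dvd_zero _) dvd_rfl) (hu 1)
    omega
  have hu1 : u 1 ≠ 0 := by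
    intro hz
    have := unit_hom (hrel dvd_rfl (hz ▸ dvd_zero _)) (hu 0)
    omega
  have hφ2 : ¬ ∃ a b, φ 2 = a * u 0 + b * u 1 := by
    rintro ⟨x, y, h2⟩
    apply hnf ![-y, x, s]
    rw [cross_apply]
    ext1 i
    fin_cases i
    · simp [hu2]; linear_combination h0
    · simp [hu2]; linear_combination h1
    · simp; linear_combination h2
  have hS0 : (s * u 1).IsHomogeneous e := h0 ▸ hφ 0
  have hS1 : (s * u 0).IsHomogeneous e := by
    have := (hφ 1).neg
    rwa [h1, show -(-s * u 0) = s * u 0 by ring] at this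
  refine ⟨u, ![0, φ 2, s * u 0], ![-φ 2, 0, s * u 1], ?_, ?_, ?_, hu, ?_, ?_, ?_, ![φ 2, -u 1, u 0],
    ?_, ?_, ?_, ?_, ?_⟩
  · rw [Fin.sum_univ_three, hu2]; exact h
  · rw [Fin.sum_univ_three, h1]; simp; ring
  · rw [Fin.sum_univ_three, h0]; simp; ring
  · intro i
    fin_cases i
    · exact isHomogeneous_zero _ _ _
    · exact hφ 2
    · exact hS1
  · intro i
    fin_cases i
    · exact (hφ 2).neg
    · exact isHomogeneous_zero _ _ _
    · exact hS0
  · intro w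
    rw [Submodule.mem_span_triple]
    constructor
    · intro hw
      rw [Fin.sum_univ_three] at hw
      obtain ⟨c, hcw⟩ : s ∣ w 2 := by
        refine hc.dvd s hs _ fun i => ?_
        fin_cases i
        · exact ⟨u 1 * w 2, by simp [h0]; ring⟩
        · exact ⟨-u 0 * w 2, by simp [h1]; ring⟩
        · exact ⟨-w 0 * u 1 + w 1 * u 0, by simp; rw [h0, h1] at hw; linear_combination hw⟩
      have hw' : w 0 * u 1 - w 1 * u 0 + c * φ 2 = 0 := by
        rw [h0, h1, hcw] at hw
        apply mul_left_cancel₀ hs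
        linear_combination hw
      obtain ⟨α, β, hαβ⟩ := (lin_prime (hu 0) (hu 1) hrel (f := c) (g := φ 2)
        ⟨w 1, -w 0, by linear_combination hw'⟩).resolve_right hφ2
      rw [hαβ] at hw'
      obtain ⟨t, ht0, ht1⟩ := relprime_syz (a := -w 1 + α * φ 2) (b := w 0 + β * φ 2) hrel
        (by linear_combination hw')
      refine ⟨-t, α, β, ?_⟩
      ext1 i
      fin_cases i
      · simp [Matrix.vecHead, Matrix.vecTail]; linear_combination -ht1
      · simp [Matrix.vecHead, Matrix.vecTail]; linear_combination ht0
      · simp [hu2, Matrix.vecHead, Matrix.vecTail]; rw [hcw, hαβ]; ring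
    · rintro ⟨a, b, c, rfl⟩
      rw [Fin.sum_univ_three, h0, h1]
      simp [hu2, Matrix.vecHead, Matrix.vecTail]
      ring
  · intro hz
    have := congrFun hz 2
    simp [hu0] at this
  · exact hφ 2
  · exact (hu 1).neg
  · exact hu 0
  · intro a
    rw [Submodule.mem_span_singleton]
    constructor
    · intro ha
      have a0 := congrFun ha 0
      have a1 := congrFun ha 1
      have a2 := congrFun ha 2
      simp [hu2, Matrix.vecHead, Matrix.vecTail] at a0 a1 a2
      have : a 1 * u 0 + a 2 * u 1 = 0 := by
        apply mul_left_cancel₀ hs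
        linear_combination a2
      obtain ⟨t, ht0, ht1⟩ := relprime_syz hrel this
      refine ⟨-t, ?_⟩
      ext1 i
      fin_cases i
      · simp
        apply mul_right_cancel₀ hu1
        rw [ht0] at a1
        linear_combination -a1
      · simp [ht0]
      · simp [ht1]
    · rintro ⟨t, rfl⟩
      ext1 i
      fin_cases i
      · simp [Matrix.vecHead, Matrix.vecTail]; ring
      · simp [Matrix.vecHead, Matrix.vecTail]; ring
      · simp [hu2, Matrix.vecHead, Matrix.vecTail]; ring

end good


section transfer
variable {k : Type*} [Field k]

lemma Good.transfer {φ φ' : Fin 3 → MvPolynomial (Fin 3) k} {e : ℕ}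
    (T : (Fin 3 → MvPolynomial (Fin 3) k) ≃ₗ[MvPolynomial (Fin 3) k]
      (Fin 3 → MvPolynomial (Fin 3) k))
    (hT : ∀ w, ∑ i, T w i * φ i = ∑ i, w i * φ' i)
    (hh : ∀ w n, (∀ i, (w i).IsHomogeneous n) → ∀ i, (T w i).IsHomogeneous n)
    (hG : Good φ' e) : Good φ e := by
  obtain ⟨u, v, w, h1, h2, h3, h4, h5, h6, h7, r, h8, h9, h10, h11, h12⟩ := hG
  refine ⟨T u, T v, T w, by rw [hT, h1], by rw [hT, h2], by rw [hT, h3], hh _ _ h4, hh _ _ h5,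
    hh _ _ h6, ?_, r, h8, h9, h10, h11, ?_⟩
  · intro x
    obtain ⟨y, rfl⟩ := T.surjective x
    rw [hT, h7, Submodule.mem_span_triple, Submodule.mem_span_triple]
    simp only [← map_smul, ← map_add, T.injective.eq_iff]
  · intro a
    rw [← h12]
    simp only [← map_smul, ← map_add]
    exact T.map_eq_zero_iff

lemma Cop.of_comb {A : Type*} [CommRing A] {x y : Fin 3 → A} (hx : Cop x)
    (M : Fin 3 → Fin 3 → A) (h : ∀ i, x i = ∑ j, M i j * y j) : Cop y := by
  intro p hp
  by_contra! hall
  obtain ⟨i, hi⟩ := hx p hp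
  apply hi
  rw [h]
  exact Finset.dvd_sum fun j _ => (hall j).mul_left _

lemma exists_P {c : Fin 3 → k} (hc : c ≠ 0) :
    ∃ P : Matrix (Fin 3) (Fin 3) k, P.det ≠ 0 ∧ P 2 = c := by
  by_cases h2 : c 2 = 0
  · by_cases h1 : c 1 = 0
    · have h0 : c 0 ≠ 0 := by
        intro h0
        apply hc
        ext i
        fin_cases i <;> assumption
      refine ⟨Matrix.of ![![0, 1, 0], ![0, 0, 1], c], ?_, rfl⟩
      simp [Matrix.det_fin_three, h0]
    · refine ⟨Matrix.of ![![1, 0, 0], ![0, 0, 1], c], ?_, rfl⟩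
      simp [Matrix.det_fin_three, h1]
  · refine ⟨Matrix.of ![![1, 0, 0], ![0, 1, 0], c], ?_, rfl⟩
    simp [Matrix.det_fin_three, h2]

lemma cross_det {A : Type*} [CommRing A] (P : Matrix (Fin 3) (Fin 3) A) (u v : Fin 3 → A) :
    Matrix.vecMul (crossProduct (P.mulVec u) (P.mulVec v)) P = crossProduct u (P.det • v) := by
  ext1 i
  fin_cases i <;>
  · simp [cross_apply, Matrix.vecMul, Matrix.mulVec, dotProduct, Fin.sum_univ_three,
      Matrix.det_fin_three]
    ring

lemma hom_comb {w : Fin 3 → MvPolynomial (Fin 3) k} {n : ℕ} (hw : ∀ i, (w i).IsHomogeneous n)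
    (a : Fin 3 → k) : (∑ j, C (a j) * w j).IsHomogeneous n := by
  refine IsHomogeneous.sum _ _ _ fun j _ => ?_
  simpa using (isHomogeneous_C (Fin 3) (a j)).mul (hw j)

lemma good_of {φ u : Fin 3 → MvPolynomial (Fin 3) k} {e : ℕ} (he : 0 < e)
    (hφ : ∀ i, (φ i).IsHomogeneous e) (hc : Cop φ) (hu : ∀ i, (u i).IsHomogeneous 1)
    (hcu : Cop u) (h : ∑ i, u i * φ i = 0)
    (hnf : ∀ v, φ ≠ crossProduct u v) : Good φ e := by
  choose A hA using fun i => hom_one (hu i)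
  by_cases hdet : (Matrix.of A).det = 0
  swap
  · obtain ⟨v, hv⟩ := indep_case (Matrix.of A) hdet hA h
    exact (hnf v hv).elim
  obtain ⟨c, hc0, hcA⟩ := Matrix.exists_vecMul_eq_zero_iff.2 hdet
  have hcu0 : ∑ i, C (c i) * u i = 0 := by
    have (j : Fin 3) : ∑ i, c i * A i j = 0 := by
      simpa [Matrix.vecMul, dotProduct] using congrFun hcA j
    simp only [hA, Finset.mul_sum, ← mul_assoc, ← C_mul]
    rw [Finset.sum_comm]
    simp only [← Finset.sum_mul, ← map_sum, this]
    simp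
  obtain ⟨P, hP, hP2⟩ := exists_P hc0
  have hPQ := Matrix.mul_nonsing_inv P hP.isUnit
  have hQP := Matrix.nonsing_inv_mul P hP.isUnit
  set Q := P⁻¹
  let PR : Matrix (Fin 3) (Fin 3) (MvPolynomial (Fin 3) k) := P.map C
  let QR : Matrix (Fin 3) (Fin 3) (MvPolynomial (Fin 3) k) := Q.map C
  have hPQ' : PR * QR = 1 := by
    change P.map C * Q.map C = 1
    rw [← Matrix.map_mul, hPQ, Matrix.map_one _ (map_zero _) (map_one _)]
  have hQP' : QR * PR = 1 := by
    change Q.map C * P.map C = 1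
    rw [← Matrix.map_mul, hQP, Matrix.map_one _ (map_zero _) (map_one _)]
  let T : (Fin 3 → MvPolynomial (Fin 3) k) ≃ₗ[MvPolynomial (Fin 3) k]
      (Fin 3 → MvPolynomial (Fin 3) k) :=
    LinearEquiv.ofLinearMap QR.mulVecLin PR.mulVecLin
      (by rw [← Matrix.mulVecLin_mul, hQP', Matrix.mulVecLin_one])
      (by rw [← Matrix.mulVecLin_mul, hPQ', Matrix.mulVecLin_one])
  have hTa (w) : T w = QR.mulVec w := rfl
  set φ' := Matrix.vecMul φ QR with hφ'
  set u' := PR.mulVec u with hu'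
  have bu : u = QR.mulVec u' := by rw [hu', Matrix.mulVec_mulVec, hQP', Matrix.one_mulVec]
  have bφ : φ = Matrix.vecMul φ' PR := by rw [hφ', Matrix.vecMul_vecMul, hQP', Matrix.vecMul_one]
  have hdot (w) : ∑ i, T w i * φ i = ∑ i, w i * φ' i := by
    rw [hTa, hφ']
    change QR.mulVec w ⬝ᵥ φ = w ⬝ᵥ Matrix.vecMul φ QR
    rw [dotProduct_comm, Matrix.dotProduct_mulVec, dotProduct_comm]
  have hhom (M : Matrix (Fin 3) (Fin 3) k) (w : Fin 3 → MvPolynomial (Fin 3) k) (n : ℕ)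
      (hw : ∀ i, (w i).IsHomogeneous n) (i) : ((M.map C).mulVec w i).IsHomogeneous n :=
    hom_comb hw (M i)
  refine Good.transfer T hdot (fun w n hw i => hhom Q w n hw i) ?_
  have hφ'c (i) : φ' i = ∑ j, C (Q j i) * φ j := by
    simp only [hφ', Matrix.vecMul, dotProduct]
    exact Finset.sum_congr rfl fun j _ => mul_comm _ _
  refine lemmaB (u := u') he (fun i => ?_) ?_ (hhom P u 1 hu) ?_ ?_ ?_ ?_
  · rw [hφ'c]; exact hom_comb hφ fun j => Q j i
  · refine hc.of_comb (fun i j => PR j i) fun i => ?_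
    conv_lhs => rw [bφ]
    simp only [Matrix.vecMul, dotProduct]
    exact Finset.sum_congr rfl fun j _ => mul_comm _ _
  · change ∑ j, C (P 2 j) * u j = 0
    rw [hP2, hcu0]
  · refine hcu.of_comb QR fun i => ?_
    conv_lhs => rw [bu]
    rfl
  · rw [← hdot, hTa, ← bu, h]
  · intro v hv
    apply hnf (PR.det • QR.mulVec v)
    rw [← cross_det, Matrix.mulVec_mulVec, hPQ', Matrix.one_mulVec, ← hu', ← hv, ← bφ]

lemma num_of_good {φ : Fin 3 → MvPolynomial (Fin 3) k} {e : ℕ}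
    (hG : Good φ e) : NumHyp φ e := by
  obtain ⟨u, v, w, h1, h2, h3, h4, h5, h6, h7, r, h8, h9, h10, h11, h12⟩ := hG
  filter_upwards [eventually_ge_atTop (e + 1)] with m hm
  obtain ⟨n, rfl⟩ := Nat.exists_eq_add_of_le hm
  let H (j : ℕ) := homogeneousSubmodule (Fin 3) k j
  let f : (H (n + e) × H (n + 1) × H (n + 1)) →ₗ[k] (Fin 3 → MvPolynomial (Fin 3) k) :=
    { toFun := fun x => x.1.1 • u + x.2.1.1 • v + x.2.2.1 • w
      map_add' := by intro x y; simp [add_smul]; abel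
      map_smul' := by intro c x; simp [smul_assoc] }
  let g : H n →ₗ[k] (H (n + e) × H (n + 1) × H (n + 1)) :=
    { toFun := fun t => (⟨t.1 * r 0, IsHomogeneous.mul t.2 h9⟩, ⟨t.1 * r 1, IsHomogeneous.mul t.2 h10⟩,
        ⟨t.1 * r 2, IsHomogeneous.mul t.2 h11⟩)
      map_add' := by 
        intro x y
        exact Prod.ext (Subtype.ext (add_mul _ _ _)) (Prod.ext (Subtype.ext (add_mul _ _ _))
          (Subtype.ext (add_mul _ _ _)))
      map_smul' := by 
        intro x y
        exact Prod.ext (Subtype.ext (smul_mul_assoc _ _ _))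
          (Prod.ext (Subtype.ext (smul_mul_assoc _ _ _)) (Subtype.ext (smul_mul_assoc _ _ _))) }
  have key := la_exact g f (Syz φ (e + 1 + n)) ?_ ?_ ?_
  · rw [Module.finrank_prod, Module.finrank_prod] at key
    have a1 := finrank3 (k := k) (n + e)
    have a2 := finrank3 (k := k) (n + 1)
    have a3 := finrank3 (k := k) n
    zify at key a1 a2 a3
    push_cast
    simp only [H] at key
    linear_combination -2 * key + a1 + 2 * a2 - a3
  · rw [injective_iff_map_eq_zero]
    intro t ht
    obtain ⟨i, hi⟩ : ∃ i, r i ≠ 0 := by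
      by_contra! hcon
      exact h8 (funext hcon)
    have : t.1 * r i = 0 := by
      fin_cases i
      · exact congrArg (fun x => x.1.1) ht
      · exact congrArg (fun x => x.2.1.1) ht
      · exact congrArg (fun x => x.2.2.1) ht
    exact Subtype.ext ((mul_eq_zero.1 this).resolve_right hi)
  · rintro ⟨a, b, c⟩
    have := h12 ![a.1, b.1, c.1]
    rw [Submodule.mem_span_singleton] at this
    refine this.trans ⟨?_, ?_⟩
    · rintro ⟨t, ht⟩
      refine ⟨⟨homogeneousComponent n t, homogeneousComponent_isHomogeneous _ _⟩, ?_⟩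
      have t0 : t * r 0 = a.1 := congrFun ht 0
      have t1 : t * r 1 = b.1 := congrFun ht 1
      have t2 : t * r 2 = c.1 := congrFun ht 2
      refine Prod.ext (Subtype.ext ?_) (Prod.ext (Subtype.ext ?_) (Subtype.ext ?_))
      · change homogeneousComponent n t * r 0 = a.1
        rw [← comp_mul n h9, t0, homogeneousComponent_eq_self a.2]
      · change homogeneousComponent n t * r 1 = b.1
        rw [← comp_mul n h10, t1, homogeneousComponent_eq_self b.2]
      · change homogeneousComponent n t * r 2 = c.1
        rw [← comp_mul n h11, t2, homogeneousComponent_eq_self c.2]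
    · rintro ⟨t, ht⟩
      refine ⟨t.1, ?_⟩
      ext1 i
      fin_cases i
      · exact congrArg (fun x => x.1.1) ht
      · exact congrArg (fun x => x.2.1.1) ht
      · exact congrArg (fun x => x.2.2.1) ht
  · intro x
    rw [mem_Syz, h7, Submodule.mem_span_triple]
    constructor
    · rintro ⟨hx, a, b, c, rfl⟩
      refine ⟨(⟨homogeneousComponent (n + e) a, homogeneousComponent_isHomogeneous _ _⟩,
        ⟨homogeneousComponent (n + 1) b, homogeneousComponent_isHomogeneous _ _⟩,
        ⟨homogeneousComponent (n + 1) c, homogeneousComponent_isHomogeneous _ _⟩), ?_⟩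
      ext1 i
      change homogeneousComponent (n + e) a * u i + homogeneousComponent (n + 1) b * v i
        + homogeneousComponent (n + 1) c * w i = _
      rw [← comp_mul _ (h4 i), ← comp_mul _ (h5 i), ← comp_mul _ (h6 i),
        ← homogeneousComponent_eq_self (hx i), show n + e + 1 = e + 1 + n by ring,
        show n + 1 + e = e + 1 + n by ring, ← map_add, ← map_add]
      simp
    · rintro ⟨⟨a, b, c⟩, rfl⟩
      refine ⟨fun i => ?_, a.1, b.1, c.1, rfl⟩
      have i1 := IsHomogeneous.mul a.2 (h4 i)
      have i2 := IsHomogeneous.mul b.2 (h5 i)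
      have i3 := IsHomogeneous.mul c.2 (h6 i)
      rw [show n + e + 1 = e + 1 + n by ring] at i1
      rw [show n + 1 + e = e + 1 + n by ring] at i2 i3
      exact (i1.add i2).add i3
end transfer

/-- **Nearly-free criterion** (Theorem, part 2): with `I = (φ₀,φ₁,φ₂)` generated by
three homogeneous polynomials of degree `d-1`, `d ≥ 6` (i.e. `-c₁(E) = d-1 ≥ 5`) and
`dim R/I ≤ 1`, the eventual Hilbert function of `R/I` equals `(d-1)² - (d-1)`
(i.e. `(d-1)² - τ(Z) = d-1`, the condition `-c₁(E) = c₂(E)`) if and only if the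
sheaf of relations `E` is nearly free of exponents `(1, d-1)`: the syzygy module `N`
is generated by syzygies `u, v₁, v₂` of degrees `1, d-1, d-1` whose relation module
is generated by a single nonzero element of degrees `(d-1, 1, 1)`. -/
theorem stmt2 (k : Type*) [Field k] [IsAlgClosed k] (d : ℕ) (hd : 6 ≤ d)
    (φ : Fin 3 → MvPolynomial (Fin 3) k)
    (hφ : ∀ i, (φ i).IsHomogeneous (d - 1))
    (I : Ideal (MvPolynomial (Fin 3) k))
    (hI : I = Ideal.span (Set.range φ))
    (hdim : ringKrullDim (MvPolynomial (Fin 3) k ⧸ I) ≤ 1) :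
    (∀ᶠ m in atTop,
        (Module.finrank k
            ((homogeneousSubmodule (Fin 3) k m).map
              (Ideal.Quotient.mkₐ k I).toLinearMap) : ℤ)
          = ((d : ℤ) - 1) ^ 2 - ((d : ℤ) - 1))
    ↔ ∃ u v₁ v₂ : Fin 3 → MvPolynomial (Fin 3) k,
        (∑ i, u i * φ i = 0) ∧ (∑ i, v₁ i * φ i = 0) ∧ (∑ i, v₂ i * φ i = 0) ∧
        (∀ i, (u i).IsHomogeneous 1) ∧
        (∀ i, (v₁ i).IsHomogeneous (d - 1)) ∧ (∀ i, (v₂ i).IsHomogeneous (d - 1)) ∧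
        (∀ w : Fin 3 → MvPolynomial (Fin 3) k,
          (∑ i, w i * φ i = 0) ↔
            w ∈ Submodule.span (MvPolynomial (Fin 3) k) {u, v₁, v₂}) ∧
        ∃ r : Fin 3 → MvPolynomial (Fin 3) k,
          r ≠ 0 ∧
          (r 0).IsHomogeneous (d - 1) ∧
          (r 1).IsHomogeneous 1 ∧ (r 2).IsHomogeneous 1 ∧
          (∀ a : Fin 3 → MvPolynomial (Fin 3) k,
            (a 0 • u + a 1 • v₁ + a 2 • v₂ = 0) ↔
              a ∈ Submodule.span (MvPolynomial (Fin 3) k) {r}) := by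
  have he : ((d - 1 : ℕ) : ℤ) = (d : ℤ) - 1 := by
    push_cast [Nat.cast_sub (show 1 ≤ d by omega)]
    ring
  have hiff := numHyp_iff hφ I hI
  rw [he] at hiff
  rw [hiff]
  change NumHyp φ (d - 1) ↔ Good φ (d - 1)
  refine ⟨fun hN => ?_, num_of_good⟩
  have : Infinite k := IsAlgClosed.instInfinite
  obtain ⟨t, ht⟩ := exists_line (by omega) hφ I hI hdim
  obtain ⟨u, hu, _, hcu, hnf⟩ := exists_deg_one (by omega) hφ hN ht
  rw [mem_Syz] at hu
  exact good_of (by omega) hφ (Cop_of_line (by omega) hφ ht) hu.1 hcu hu.2 hnf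
end
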